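/- arXiv:2501.11415 — 6 statements merged into one kernel-verified Lean document; each statement's English description precedes it below -/
import Mathlib

section
/- Let p be a prime, let G be a finite group of order divisible by p, and let S be a Sylow p-subgroup of G. Assume that Ω1(S) ≤ Z(S) and that N_G(S) controls p-fusion in G. Then the Grodal subgroup R of N_G(S) is equal to the subgroup of N_G(S) generated by the sets N_G(S) ∩ O^{p'}(N_G(Q)), where Q ranges over the nontrivial subgroups of Ω1(S). -/
open Subgroup Pointwise

/-- `Ω₁(S)`: the subgroup generated by the elements of `S` of order dividing `p`. -/
def omega1 {G : Type*} [Group G] (p : ℕ) (S : Subgroup G) : Subgroup G :=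
  Subgroup.closure {g : G | g ∈ S ∧ g ^ p = 1}

/-- `O^{p'}(H)`: the subgroup generated by the elements of `H` of `p`-power order. -/
def pResidual {G : Type*} [Group G] (p : ℕ) (H : Subgroup G) : Subgroup G :=
  Subgroup.closure {g : G | g ∈ H ∧ ∃ n : ℕ, g ^ p ^ n = 1}

/-- `H` controls `p`-fusion in `G` with respect to the Sylow `p`-subgroup `S`. -/
def ControlsPFusion {G : Type*} [Group G] (S H : Subgroup G) : Prop :=
  ∀ Q : Subgroup G, Q ≤ S → ∀ g : G, (∀ q ∈ Q, g * q * g⁻¹ ∈ S) →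
    ∃ h ∈ H, ∃ c ∈ Subgroup.centralizer (Q : Set G), g = h * c

/-- The product `g₁ ⋯ g_i` of the first `i` values of the sequence `g₁, g₂, …`. -/
def partialProd {G : Type*} [Group G] (gs : ℕ → G) (i : ℕ) : G :=
  ((List.range i).map fun j => gs (j + 1)).prod

/-- The generators of the Grodal subgroup of `N_G(S)`. -/
def GrodalGenerators {G : Type*} [Group G] (p : ℕ) (S : Subgroup G) : Set G :=
  {g : G | g ∈ Subgroup.normalizer (S : Set G) ∧ ∃ n : ℕ, 1 ≤ n ∧ ∃ Q : ℕ → Subgroup G, ∃ gs : ℕ → G,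
    (∀ i ≤ n, Q i ≠ ⊥ ∧ Q i ≤ S) ∧
    (∀ i, 1 ≤ i → i ≤ n → gs i ∈ pResidual p (Subgroup.normalizer (Q i : Set G))) ∧
    g = partialProd gs n ∧ Q 0 ≤ Q 1 ∧
    (∀ i, 1 ≤ i → i ≤ n - 1 →
      ∀ x ∈ Q 0, (partialProd gs i)⁻¹ * x * partialProd gs i ∈ Q (i + 1))}

/-- The Grodal subgroup `R` of `N_G(S)`. -/
def grodalSubgroup {G : Type*} [Group G] (p : ℕ) (S : Subgroup G) : Subgroup G :=
  Subgroup.closure (GrodalGenerators p S)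

/-!
Put `Ω = Ω₁(S)` and let `T` be the subgroup generated by the `N_G(S) ∩ O^{p'}(N_G(Q))`, where
`1 ≠ Q ≤ Ω`. That `T ≤ R` is clear: chains of length one suffice. For `R ≤ T`, replacing every
`Q_i` by `Ω₁(Q_i)` turns any chain into one inside `Ω`. If `A ≤ Ω` then `S ≤ C_G(A)`, as `Ω` is
central in `S`, so control of fusion and the Frattini argument give
`N_G(A) = O^{p'}(C_G(A)) N_G(S)`. By the modular law every `g_i ∈ O^{p'}(N_G(Q_i))` thus lies in
`O^{p'}(C_G(Q_i)) T`. Along the chain the factors from `O^{p'}(C_G(Q_i))` can be moved to the left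
into `O^{p'}(C_G(Q_0))`, so that `g_1 ⋯ g_n ∈ O^{p'}(C_G(Q_0)) T`; and an element of this set which
normalizes `S` already lies in `T`.
-/

section Omega1

variable {G G' : Type*} [Group G] [Group G'] {p : ℕ} {H K : Subgroup G}

theorem omega1_le : omega1 p H ≤ H :=
  (closure_le H).2 fun _ hx => hx.1

theorem omega1_mono (h : H ≤ K) : omega1 p H ≤ omega1 p K :=
  closure_mono fun _ hx => ⟨h hx.1, hx.2⟩

theorem omega1_le_comap {f : G →* G'} {L : Subgroup G'} (h : H ≤ L.comap f) :
    omega1 p H ≤ (omega1 p L).comap f :=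
  (closure_le _).2 fun x hx => subset_closure ⟨h hx.1, by rw [← map_pow, hx.2, map_one]⟩

theorem normalizer_le_normalizer_omega1 :
    normalizer (H : Set G) ≤ normalizer (omega1 p H : Set G) :=
  le_normalizer_iff.2 fun g hg _ hx =>
    omega1_le_comap (f := (MulAut.conj g).toMonoidHom)
      (fun y hy => (mem_normalizer_iff.1 hg y).1 hy) hx

theorem omega1_eq_bot_iff (hH : IsPGroup p H) : omega1 p H = ⊥ ↔ H = ⊥ := by
  refine ⟨fun hbot => ?_, fun hbot => le_bot_iff.1 (omega1_le.trans_eq hbot)⟩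
  have eq_one_of_pow_eq_one {x : G} (hx : x ∈ H) (h : x ^ p = 1) : x = 1 := by
    rw [← mem_bot, ← hbot]
    exact subset_closure ⟨hx, h⟩
  refine (eq_bot_iff_forall H).2 fun x hx => ?_
  obtain ⟨n, hn⟩ := hH ⟨x, hx⟩
  replace hn : x ^ p ^ n = 1 := congrArg Subtype.val hn
  induction n with
  | zero => simpa only [pow_zero, pow_one] using hn
  | succ n ih => exact ih (eq_one_of_pow_eq_one (pow_mem hx _) (by rwa [← pow_mul, ← pow_succ]))

end Omega1

section PResidual

variable {G G' : Type*} [Group G] [Group G'] {p : ℕ} {H K : Subgroup G}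

theorem pResidual_le : pResidual p H ≤ H :=
  (closure_le H).2 fun _ hx => hx.1

theorem pResidual_mono (h : H ≤ K) : pResidual p H ≤ pResidual p K :=
  closure_mono fun _ hx => ⟨h hx.1, hx.2⟩

theorem pResidual_le_comap {f : G →* G'} {L : Subgroup G'} (h : H ≤ L.comap f) :
    pResidual p H ≤ (pResidual p L).comap f :=
  (closure_le _).2 fun x ⟨hx, n, hn⟩ =>
    subset_closure ⟨h hx, n, by rw [← map_pow, hn, map_one]⟩

theorem normalizer_le_normalizer_pResidual :
    normalizer (H : Set G) ≤ normalizer (pResidual p H : Set G) :=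
  le_normalizer_iff.2 fun g hg _ hx =>
    pResidual_le_comap (f := (MulAut.conj g).toMonoidHom)
      (fun y hy => (mem_normalizer_iff.1 hg y).1 hy) hx

theorem le_pResidual_of_isPGroup (hH : IsPGroup p H) (h : H ≤ K) : H ≤ pResidual p K := by
  intro x hx
  obtain ⟨n, hn⟩ := hH ⟨x, hx⟩
  exact subset_closure ⟨h hx, n, congrArg Subtype.val hn⟩

end PResidual

section Factorization

variable {G : Type*} [Group G] {p : ℕ} [Fact p.Prime] [Finite (Sylow p G)]

theorem normalizer_subset_mul_normalizer_sylow {S : Sylow p G} {K : Subgroup G} (hSK : ↑S ≤ K) :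
    (normalizer (K : Set G) : Set G) ⊆ (K : Set G) * normalizer ((S : Subgroup G) : Set G) := by
  intro g hg
  have hgSK : ((g • S : Sylow p G) : Subgroup G) ≤ K := by
    intro x hx
    rw [Sylow.coe_subgroup_smul, mem_pointwise_smul_iff_inv_smul_mem] at hx
    refine (mem_normalizer_iff''.1 hg x).2 (hSK ?_)
    simpa using hx
  obtain ⟨k, hk⟩ := MulAction.exists_smul_eq K ((g • S).subtype hgSK) (S.subtype hSK)
  have hkgS : ((k : G) * g) • S = S := by
    rw [Sylow.smul_subtype] at hk
    rw [mul_smul]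
    exact Sylow.subtype_injective hk
  have hkg : (k : G) * g ∈ normalizer ((S : Subgroup G) : Set G) :=
    Sylow.smul_eq_iff_mem_normalizer.1 hkgS
  exact ⟨_, inv_mem k.2, _, hkg, inv_mul_cancel_left _ _⟩

theorem normalizer_subset_pResidual_centralizer_mul {S : Sylow p G} {A : Subgroup G}
    (hfus : ControlsPFusion (S : Subgroup G) (normalizer ((S : Subgroup G) : Set G)))
    (hAS : A ≤ S) (hcen : A ≤ centralizer ((S : Subgroup G) : Set G)) :
    (normalizer (A : Set G) : Set G) ⊆
      (pResidual p (centralizer (A : Set G)) : Set G) *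
        normalizer ((S : Subgroup G) : Set G) := by
  intro x hx
  obtain ⟨h, hh, c, hc, hxhc⟩ := hfus A hAS x⁻¹ fun a ha =>
    hAS ((mem_normalizer_iff.1 (inv_mem hx) a).1 ha)
  have hSK : (S : Subgroup G) ≤ pResidual p (centralizer (A : Set G)) :=
    le_pResidual_of_isPGroup S.isPGroup' (le_centralizer_iff.1 hcen)
  have hcK : c⁻¹ ∈ normalizer (pResidual p (centralizer (A : Set G)) : Set G) :=
    normalizer_le_normalizer_pResidual (le_normalizer (inv_mem hc))
  obtain ⟨k, hk, r, hr, hkr⟩ := normalizer_subset_mul_normalizer_sylow hSK hcK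
  refine ⟨k, hk, r * h⁻¹, mul_mem hr (inv_mem hh), ?_⟩
  calc
    k * (r * h⁻¹) = c⁻¹ * h⁻¹ := by rw [← hkr, mul_assoc]
    _ = x := by rw [← mul_inv_rev, ← hxhc, inv_inv]

theorem pResidual_normalizer_subset_mul {S : Sylow p G} {A : Subgroup G}
    (hfus : ControlsPFusion (S : Subgroup G) (normalizer ((S : Subgroup G) : Set G)))
    (hAS : A ≤ S) (hcen : A ≤ centralizer ((S : Subgroup G) : Set G)) :
    (pResidual p (normalizer (A : Set G)) : Set G) ⊆
      (pResidual p (centralizer (A : Set G)) : Set G) *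
        (normalizer ((S : Subgroup G) : Set G) ⊓ pResidual p (normalizer (A : Set G)) :
          Subgroup G) := by
  rw [mul_inf_assoc _ _ _ (pResidual_mono (centralizer_le_normalizer _))]
  exact Set.subset_inter
    (fun _ hx => normalizer_subset_pResidual_centralizer_mul hfus hAS hcen (pResidual_le hx))
    subset_rfl

end Factorization

section Chains

variable {G : Type*} [Group G] {p : ℕ}

theorem partialProd_zero (gs : ℕ → G) : partialProd gs 0 = 1 := rfl

theorem partialProd_succ (gs : ℕ → G) (i : ℕ) :
    partialProd gs (i + 1) = partialProd gs i * gs (i + 1) := by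
  simp [partialProd, List.range_succ]

theorem conj_mem_centralizer {A B : Set G} {r y : G} (hAB : ∀ a ∈ A, r⁻¹ * a * r ∈ B)
    (hy : y ∈ centralizer B) : r * y * r⁻¹ ∈ centralizer A := by
  refine mem_centralizer_iff.2 fun a ha => ?_
  calc
    a * (r * y * r⁻¹) = r * (r⁻¹ * a * r * y) * r⁻¹ := by group
    _ = r * (y * (r⁻¹ * a * r)) * r⁻¹ := by rw [mem_centralizer_iff.1 hy _ (hAB a ha)]
    _ = r * y * r⁻¹ * a := by group

theorem mul_mem_pResidual_centralizer_mul {A B : Set G} {T : Subgroup G} {x y : G}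
    (hx : x ∈ (pResidual p (centralizer A) : Set G) * (T : Set G))
    (hAB : ∀ a ∈ A, x⁻¹ * a * x ∈ B)
    (hy : y ∈ (pResidual p (centralizer B) : Set G) * (T : Set G)) :
    x * y ∈ (pResidual p (centralizer A) : Set G) * (T : Set G) := by
  obtain ⟨u, hu, r, hr, rfl⟩ := hx
  obtain ⟨k, hk, s, hs, rfl⟩ := hy
  have hrAB : ∀ a ∈ A, r⁻¹ * a * r ∈ B := fun a ha => by
    have hua : a * u = u * a := mem_centralizer_iff.1 (pResidual_le hu) a ha
    have : (u * r)⁻¹ * a * (u * r) = r⁻¹ * a * r := by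
      calc
        (u * r)⁻¹ * a * (u * r) = r⁻¹ * u⁻¹ * (a * u) * r := by group
        _ = r⁻¹ * a * r := by rw [hua]; group
    exact this ▸ hAB a ha
  have hrk : r * k * r⁻¹ ∈ pResidual p (centralizer A) :=
    pResidual_le_comap (f := (MulAut.conj r).toMonoidHom)
      (fun _ => conj_mem_centralizer hrAB) hk
  exact ⟨u * (r * k * r⁻¹), mul_mem hu hrk, r * s, mul_mem hr hs, by group⟩

theorem partialProd_mem_pResidual_centralizer_mul {A : Set G} {B : ℕ → Set G} {T : Subgroup G}
    {gs : ℕ → G} {n : ℕ}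
    (hgs : ∀ i < n, gs (i + 1) ∈ (pResidual p (centralizer (B i)) : Set G) * (T : Set G))
    (hAB : ∀ i < n, ∀ a ∈ A, (partialProd gs i)⁻¹ * a * partialProd gs i ∈ B i) :
    partialProd gs n ∈ (pResidual p (centralizer A) : Set G) * (T : Set G) := by
  induction n with
  | zero => exact ⟨1, one_mem _, 1, one_mem _, mul_one 1⟩
  | succ n ih =>
    rw [partialProd_succ]
    exact mul_mem_pResidual_centralizer_mul
      (ih (fun i hi => hgs i (by lia)) fun i hi => hAB i (by lia))
      (hAB n (by lia)) (hgs n (by lia))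

end Chains

section Grodal

variable {G : Type*} [Group G] {p : ℕ}

/-- The subgroup of `N_G(S)` generated by the `N_G(S) ∩ O^{p'}(N_G(Q))` for `1 ≠ Q ≤ Ω₁(S)`,
which is to be compared with the Grodal subgroup. -/
def omega1GrodalSubgroup (p : ℕ) (S : Subgroup G) : Subgroup G :=
  ⨆ Q ∈ {Q : Subgroup G | Q ≠ ⊥ ∧ Q ≤ omega1 p S},
    normalizer (S : Set G) ⊓ pResidual p (normalizer (Q : Set G))

variable {S A : Subgroup G}

theorem omega1GrodalSubgroup_le_normalizer : omega1GrodalSubgroup p S ≤ normalizer (S : Set G) :=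
  iSup₂_le fun _ _ => inf_le_left

theorem normalizer_inf_pResidual_le_omega1GrodalSubgroup (hA : A ≠ ⊥) (hAS : A ≤ omega1 p S) :
    normalizer (S : Set G) ⊓ pResidual p (normalizer (A : Set G)) ≤ omega1GrodalSubgroup p S :=
  le_iSup₂_of_le A ⟨hA, hAS⟩ le_rfl

theorem normalizer_inf_pResidual_le_grodalSubgroup (hA : A ≠ ⊥) (hAS : A ≤ S) :
    normalizer (S : Set G) ⊓ pResidual p (normalizer (A : Set G)) ≤ grodalSubgroup p S :=
  fun g hg => subset_closure ⟨hg.1, 1, le_rfl, fun _ => A, fun _ => g, fun _ _ => ⟨hA, hAS⟩,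
    fun _ _ _ => hg.2, by rw [partialProd_succ, partialProd_zero, one_mul], le_rfl,
    fun _ _ _ => by lia⟩

theorem omega1GrodalSubgroup_le_grodalSubgroup :
    omega1GrodalSubgroup p S ≤ grodalSubgroup p S :=
  iSup₂_le fun _ hA => normalizer_inf_pResidual_le_grodalSubgroup hA.1 (hA.2.trans omega1_le)

theorem mem_omega1GrodalSubgroup_of_mem_mul (hA : A ≠ ⊥) (hAS : A ≤ omega1 p S) {g : G}
    (hgS : g ∈ normalizer (S : Set G))
    (hg : g ∈ (pResidual p (centralizer (A : Set G)) : Set G) *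
      (omega1GrodalSubgroup p S : Set G)) :
    g ∈ omega1GrodalSubgroup p S := by
  obtain ⟨u, hu, t, ht, rfl⟩ := hg
  have huS : u ∈ normalizer (S : Set G) :=
    (mul_mem_cancel_right (omega1GrodalSubgroup_le_normalizer ht)).1 hgS
  have huA : u ∈ pResidual p (normalizer (A : Set G)) :=
    pResidual_mono (centralizer_le_normalizer _) hu
  exact mul_mem (normalizer_inf_pResidual_le_omega1GrodalSubgroup hA hAS ⟨huS, huA⟩) ht

variable [Fact p.Prime] [Finite (Sylow p G)] {S : Sylow p G}

theorem pResidual_normalizer_subset_mul_omega1GrodalSubgroup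
    (hcen : omega1 p (S : Subgroup G) ≤ centralizer ((S : Subgroup G) : Set G))
    (hfus : ControlsPFusion (S : Subgroup G) (normalizer ((S : Subgroup G) : Set G)))
    (hA : A ≠ ⊥) (hAS : A ≤ omega1 p (S : Subgroup G)) :
    (pResidual p (normalizer (A : Set G)) : Set G) ⊆
      (pResidual p (centralizer (A : Set G)) : Set G) *
        (omega1GrodalSubgroup p (S : Subgroup G) : Set G) :=
  (pResidual_normalizer_subset_mul hfus (hAS.trans omega1_le) (hAS.trans hcen)).trans
    (Set.mul_subset_mul_left (normalizer_inf_pResidual_le_omega1GrodalSubgroup hA hAS))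

theorem grodalSubgroup_le_omega1GrodalSubgroup
    (hcen : omega1 p (S : Subgroup G) ≤ centralizer ((S : Subgroup G) : Set G))
    (hfus : ControlsPFusion (S : Subgroup G) (normalizer ((S : Subgroup G) : Set G))) :
    grodalSubgroup p (S : Subgroup G) ≤ omega1GrodalSubgroup p (S : Subgroup G) := by
  refine (closure_le _).2 ?_
  rintro _ ⟨hgS, n, -, Q, gs, hQ, hgs, rfl, hQ₀₁, hchain⟩
  have omega1_Q_ne_bot : ∀ i ≤ n, omega1 p (Q i) ≠ ⊥ := fun i hi =>
    (omega1_eq_bot_iff (S.isPGroup'.to_le (hQ i hi).2)).not.2 (hQ i hi).1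
  have omega1_Q_le : ∀ i ≤ n, omega1 p (Q i) ≤ omega1 p (S : Subgroup G) := fun i hi =>
    omega1_mono (hQ i hi).2
  have gs_mem : ∀ i < n, gs (i + 1) ∈
      (pResidual p (centralizer (omega1 p (Q (i + 1)) : Set G)) : Set G) *
        (omega1GrodalSubgroup p (S : Subgroup G) : Set G) := fun i hi =>
    pResidual_normalizer_subset_mul_omega1GrodalSubgroup hcen hfus (omega1_Q_ne_bot _ hi)
      (omega1_Q_le _ hi) (pResidual_mono normalizer_le_normalizer_omega1 (hgs _ (by lia) hi))
  have conj_Q_mem : ∀ i < n, ∀ x ∈ Q 0,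
      (partialProd gs i)⁻¹ * x * partialProd gs i ∈ Q (i + 1) := by
    rintro (_ | i) hi x hx
    · simpa only [partialProd_zero, inv_one, one_mul, mul_one] using hQ₀₁ hx
    · exact hchain _ (by lia) (by lia) x hx
  have conj_omega1_Q_mem : ∀ i < n, ∀ x ∈ (omega1 p (Q 0) : Set G),
      (partialProd gs i)⁻¹ * x * partialProd gs i ∈ (omega1 p (Q (i + 1)) : Set G) :=
    fun i hi _ hx => omega1_le_comap (f := (MulAut.conj (partialProd gs i)).symm.toMonoidHom)
      (conj_Q_mem i hi) hx
  exact mem_omega1GrodalSubgroup_of_mem_mul (omega1_Q_ne_bot 0 n.zero_le) (omega1_Q_le 0 n.zero_le)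
    hgS (partialProd_mem_pResidual_centralizer_mul gs_mem conj_omega1_Q_mem)

end Grodal

theorem stmt0_general {G : Type*} [Group G] {p : ℕ} [Fact p.Prime] [Finite (Sylow p G)]
    (S : Sylow p G)
    (hcen : omega1 p (S : Subgroup G) ≤ centralizer ((S : Subgroup G) : Set G))
    (hfus : ControlsPFusion (S : Subgroup G) (normalizer ((S : Subgroup G) : Set G))) :
    grodalSubgroup p (S : Subgroup G) =
      ⨆ Q ∈ {Q : Subgroup G | Q ≠ ⊥ ∧ Q ≤ omega1 p (S : Subgroup G)},
        normalizer ((S : Subgroup G) : Set G) ⊓ pResidual p (normalizer (Q : Set G)) :=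
  le_antisymm (grodalSubgroup_le_omega1GrodalSubgroup hcen hfus)
    omega1GrodalSubgroup_le_grodalSubgroup

theorem stmt0 {G : Type*} [Group G] [Fintype G] (p : ℕ) [Fact p.Prime]
    (hdvd : p ∣ Fintype.card G) (S : Sylow p G)
    (hcen : omega1 p (S : Subgroup G) ≤
      (S : Subgroup G) ⊓ Subgroup.centralizer ((S : Subgroup G) : Set G))
    (hfus : ControlsPFusion (S : Subgroup G) (Subgroup.normalizer ((S : Subgroup G) : Set G))) :
    grodalSubgroup p (S : Subgroup G) =
      ⨆ Q ∈ {Q : Subgroup G | Q ≠ ⊥ ∧ Q ≤ omega1 p (S : Subgroup G)},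
        Subgroup.normalizer ((S : Subgroup G) : Set G) ⊓ pResidual p (Subgroup.normalizer (Q : Set G)) :=
  stmt0_general S (hcen.trans inf_le_right) hfus
end

section
/- Let p be a prime, let G be a finite group with Sylow p-subgroup S, and suppose N_G(S) controls p-fusion in G. Let Q be a nontrivial subgroup of S with Q ≤ Z(S). Then N_G(Q) = (N_G(S) ∩ N_G(Q))·C_G(Q), and O^{p'}(N_G(Q)) is the subgroup generated by the conjugates gSg⁻¹ with g ranging over C_G(Q). -/
/-!
By Sylow's theorem in `N`, every element of `p`-power order of a subgroup `N ≥ S` lies in an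
`N`-conjugate of `S`, so `O^{p'}(N)` is generated by the `N`-conjugates of `S`. For `N = N_G(Q)`,
control of fusion applied to conjugation on `Q` by the elements of `N` gives
`N = (N_G(S) ∩ N) C_G(Q)`, and the factor in `N_G(S)` does not change the conjugate of `S`, so
conjugating by `C_G(Q)` suffices. Finally `S ≤ C_G(Q) ≤ N`, because `Q` centralizes `S`.
-/

open Subgroup Pointwise

section

variable {G : Type*} [Group G] {p : ℕ} {S H Q A B C N : Subgroup G}

theorem ControlsPFusion.inf_normalizer_mul_centralizer (hfus : ControlsPFusion S H) (hQS : Q ≤ S) :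
    ((H ⊓ normalizer (Q : Set G) : Subgroup G) : Set G) * (centralizer (Q : Set G) : Set G) =
      (normalizer (Q : Set G) : Set G) := by
  have hCN : centralizer (Q : Set G) ≤ normalizer (Q : Set G) := centralizer_le_normalizer _
  ext g
  constructor
  · rintro ⟨h, hh, c, hc, rfl⟩
    exact mul_mem hh.2 (hCN hc)
  · intro hg
    have hgQ : ∀ q ∈ Q, g * q * g⁻¹ ∈ S := fun q hq => hQS ((mem_normalizer_iff.1 hg q).1 hq)
    obtain ⟨h, hh, c, hc, rfl⟩ := hfus Q hQS g hgQ
    exact ⟨h, ⟨hh, (mul_mem_cancel_right (hCN hc)).1 hg⟩, c, hc, rfl⟩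

theorem map_conj_mul_of_mem_normalizer {a : G} (ha : a ∈ normalizer (S : Set G)) (c : G) :
    S.map (MulAut.conj (c * a)).toMonoidHom = S.map (MulAut.conj c).toMonoidHom := by
  have haS : S.map (MulAut.conj a).toMonoidHom = S := mem_normalizer_iff_map_conj_eq.1 ha
  calc S.map (MulAut.conj (c * a)).toMonoidHom
      = (S.map (MulAut.conj a).toMonoidHom).map (MulAut.conj c).toMonoidHom := by
        rw [map_mul]
        exact mul_smul (MulAut.conj c) (MulAut.conj a) S
    _ = S.map (MulAut.conj c).toMonoidHom := by rw [haS]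

theorem iSup_map_conj_eq_of_mul_eq (hA : A ≤ normalizer (S : Set G))
    (hB : (A : Set G) * (C : Set G) = (B : Set G)) :
    ⨆ g ∈ B, S.map (MulAut.conj g).toMonoidHom = ⨆ g ∈ C, S.map (MulAut.conj g).toMonoidHom := by
  apply le_antisymm
  · refine iSup₂_le fun g hg => ?_
    obtain ⟨a, ha, c, hc, hac : a * c = g⁻¹⟩ : g⁻¹ ∈ (A : Set G) * (C : Set G) :=
      hB ▸ inv_mem hg
    obtain rfl : c⁻¹ * a⁻¹ = g := by rw [← mul_inv_rev, hac, inv_inv]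
    rw [map_conj_mul_of_mem_normalizer (inv_mem (hA ha))]
    exact le_iSup₂_of_le c⁻¹ (inv_mem hc) le_rfl
  · have hCB : (C : Set G) ⊆ B := hB ▸ Set.subset_mul_right _ (one_mem A)
    exact biSup_mono hCB

theorem le_pResidual_of_isPGroup_s2 (hS : IsPGroup p S) (hSN : S ≤ N) : S ≤ pResidual p N := by
  intro s hs
  obtain ⟨n, hn⟩ := hS ⟨s, hs⟩
  exact subset_closure ⟨hSN hs, n, congrArg Subtype.val hn⟩

theorem isPGroup_zpowers_of_pow_eq_one {x : G} {n : ℕ} (hx : x ^ p ^ n = 1) :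
    IsPGroup p (zpowers x) :=
  IsPGroup.of_card_dvd_pow (by rw [Nat.card_zpowers]; exact orderOf_dvd_of_pow_eq_one hx)

theorem exists_mem_map_conj_of_pow_eq_one [Fact p.Prime] [Finite (Sylow p N)] (P : Sylow p G)
    (hPN : P ≤ N) {x : G} (hxN : x ∈ N) {n : ℕ} (hx : x ^ p ^ n = 1) :
    ∃ g ∈ N, x ∈ (P : Subgroup G).map (MulAut.conj g).toMonoidHom := by
  let y : N := ⟨x, hxN⟩
  have hy : y ^ p ^ n = 1 := Subtype.ext hx
  obtain ⟨R, hyR⟩ := (isPGroup_zpowers_of_pow_eq_one hy).exists_le_sylow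
  obtain ⟨g, rfl⟩ := MulAction.exists_smul_eq N (P.subtype hPN) R
  have hyg : y ∈ g • P.subtype hPN := hyR (mem_zpowers y)
  rw [Sylow.smul_subtype] at hyg
  exact ⟨g, g.2, hyg⟩

theorem pResidual_eq_iSup_map_conj [Fact p.Prime] [Finite (Sylow p N)] (P : Sylow p G)
    (hPN : P ≤ N) :
    pResidual p N = ⨆ g ∈ N, (P : Subgroup G).map (MulAut.conj g).toMonoidHom := by
  apply le_antisymm
  · refine (closure_le _).2 ?_
    rintro x ⟨hxN, n, hx⟩
    obtain ⟨g, hg, hxg⟩ := exists_mem_map_conj_of_pow_eq_one P hPN hxN hx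
    exact mem_iSup_of_mem g (mem_iSup_of_mem hg hxg)
  · refine iSup₂_le fun g hg => le_pResidual_of_isPGroup_s2 (P.isPGroup'.map _) ?_
    exact conj_smul_le_of_le hPN ⟨g, hg⟩

end

theorem stmt2_general {G : Type*} [Group G] (p : ℕ) [Fact p.Prime]
    [Finite (Sylow p G)] (S : Sylow p G)
    (hfus : ControlsPFusion (S : Subgroup G) (normalizer ((S : Subgroup G) : Set G)))
    (Q : Subgroup G) (hQS : Q ≤ (S : Subgroup G))
    (hQZ : Q ≤ centralizer ((S : Subgroup G) : Set G)) :
    ((normalizer ((S : Subgroup G) : Set G) ⊓ normalizer (Q : Set G) : Subgroup G) : Set G) *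
        (centralizer (Q : Set G) : Set G) = (normalizer (Q : Set G) : Set G) ∧
      pResidual p (normalizer (Q : Set G)) =
        ⨆ g ∈ centralizer (Q : Set G),
          map (MulAut.conj g).toMonoidHom (S : Subgroup G) := by
  have hfactor := hfus.inf_normalizer_mul_centralizer hQS
  have hSC : (S : Subgroup G) ≤ centralizer (Q : Set G) := le_centralizer_iff.1 hQZ
  have hSN : (S : Subgroup G) ≤ normalizer (Q : Set G) :=
    hSC.trans (centralizer_le_normalizer _)
  refine ⟨hfactor, ?_⟩
  calc pResidual p (normalizer (Q : Set G))
      = ⨆ g ∈ normalizer (Q : Set G), (S : Subgroup G).map (MulAut.conj g).toMonoidHom :=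
        pResidual_eq_iSup_map_conj S hSN
    _ = ⨆ g ∈ centralizer (Q : Set G), (S : Subgroup G).map (MulAut.conj g).toMonoidHom :=
        iSup_map_conj_eq_of_mul_eq inf_le_left hfactor

theorem stmt2 {G : Type*} [Group G] [Fintype G] (p : ℕ) [Fact p.Prime]
    (S : Sylow p G)
    (hfus : ControlsPFusion (S : Subgroup G) (Subgroup.normalizer ((S : Subgroup G) : Set G)))
    (Q : Subgroup G) (hQ : Q ≠ ⊥) (hQS : Q ≤ (S : Subgroup G))
    (hQZ : Q ≤ Subgroup.centralizer ((S : Subgroup G) : Set G)) :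
    ((Subgroup.normalizer ((S : Subgroup G) : Set G) ⊓ Subgroup.normalizer (Q : Set G) : Subgroup G) : Set G) *
        (Subgroup.centralizer (Q : Set G) : Set G) = (Subgroup.normalizer (Q : Set G) : Set G) ∧
      pResidual p (Subgroup.normalizer (Q : Set G)) =
        ⨆ g ∈ Subgroup.centralizer (Q : Set G),
          Subgroup.map (MulAut.conj g).toMonoidHom (S : Subgroup G) :=
  stmt2_general p S hfus Q hQS hQZ
end

section
/- Let p be a prime, let G be a finite group with Sylow p-subgroup S, and suppose N_G(S) controls p-fusion in G. If Q_0 and Q_1 are subgroups of S with 1 < Q_0 ≤ Q_1 ≤ Z(S), then O^{p'}(N_G(Q_1)) ≤ O^{p'}(N_G(Q_0)). -/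
open Subgroup

/-!
If `S` centralizes `Q₁`, then `S ≤ C_G(Q₁)`, so `C_G(Q₁)` is a normal subgroup of `N_G(Q₁)` whose
index is prime to `p`. It therefore contains every element of `N_G(Q₁)` of `p`-power order, whence
`O^{p'}(N_G(Q₁)) ≤ C_G(Q₁) ≤ C_G(Q₀) ≤ N_G(Q₀)`.
-/

section Residual

variable {G : Type*} [Group G] {p : ℕ} {H K : Subgroup G}

theorem mem_of_pow_eq_one_of_coprime_index [K.Normal] {n : ℕ} {g : G} (hg : g ^ n = 1)
    (hn : n.Coprime K.index) : g ∈ K := by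
  have hcop : K.index.Coprime (orderOf g) :=
    (hn.coprime_dvd_left (orderOf_dvd_of_pow_eq_one hg)).symm
  obtain ⟨m, hm⟩ := exists_pow_eq_self_of_coprime hcop
  exact hm ▸ K.pow_mem (K.pow_index_mem g) m

theorem pResidual_le_of_coprime_relIndex [(K.subgroupOf H).Normal]
    (hp : p.Coprime (K.relIndex H)) : pResidual p H ≤ K := by
  refine (closure_le K).mpr ?_
  rintro g ⟨hgH, n, hgn⟩
  have hg : (⟨g, hgH⟩ : H) ∈ K.subgroupOf H :=
    mem_of_pow_eq_one_of_coprime_index (Subtype.ext hgn) (hp.pow_left n)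
  exact mem_subgroupOf.mp hg

theorem pResidual_le_pResidual_of_le (h : pResidual p H ≤ K) : pResidual p H ≤ pResidual p K :=
  closure_mono fun _ hg ↦ ⟨h (subset_closure hg), hg.2⟩

theorem pResidual_normalizer_le_centralizer {s : Set G} (hp : p.Coprime (centralizer s).index) :
    pResidual p (normalizer s) ≤ centralizer s :=
  pResidual_le_of_coprime_relIndex <|
    hp.coprime_dvd_right (relIndex_dvd_index_of_le (centralizer_le_normalizer s))

end Residual

theorem stmt3_general {G : Type*} [Group G] {p : ℕ} {S Q₀ Q₁ : Subgroup G}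
    (hS : p.Coprime S.index) (hle : Q₀ ≤ Q₁) (hQ₁ : Q₁ ≤ centralizer (S : Set G)) :
    pResidual p (normalizer (Q₁ : Set G)) ≤ pResidual p (normalizer (Q₀ : Set G)) := by
  have hSC : S ≤ centralizer (Q₁ : Set G) := le_centralizer_iff.mp hQ₁
  have hp : p.Coprime (centralizer (Q₁ : Set G)).index :=
    hS.coprime_dvd_right (index_dvd_of_le hSC)
  apply pResidual_le_pResidual_of_le
  calc pResidual p (normalizer (Q₁ : Set G))
      ≤ centralizer (Q₁ : Set G) := pResidual_normalizer_le_centralizer hp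
    _ ≤ centralizer (Q₀ : Set G) := centralizer_le hle
    _ ≤ normalizer (Q₀ : Set G) := centralizer_le_normalizer _

theorem stmt3 {G : Type*} [Group G] [Fintype G] (p : ℕ) [Fact p.Prime]
    (S : Sylow p G)
    (hfus : ControlsPFusion (S : Subgroup G) (Subgroup.normalizer ((S : Subgroup G) : Set G)))
    (Q₀ Q₁ : Subgroup G) (hQ₀ : Q₀ ≠ ⊥) (hle : Q₀ ≤ Q₁)
    (hQ₁ : Q₁ ≤ (S : Subgroup G) ⊓ Subgroup.centralizer ((S : Subgroup G) : Set G)) :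
    pResidual p (Subgroup.normalizer (Q₁ : Set G)) ≤ pResidual p (Subgroup.normalizer (Q₀ : Set G)) :=
  stmt3_general ((Nat.Prime.coprime_iff_not_dvd Fact.out).mpr S.not_dvd_index) hle
    (hQ₁.trans inf_le_right)
end

section
/- Let p be a prime, let G be a finite group of order divisible by p, let k be a field of characteristic p, and let S be a Sylow p-subgroup of G. Suppose that Ω1(S) ≤ Z(S) and that N_G(S) controls p-fusion in G. Then the group of weak S-homomorphisms of G (under pointwise multiplication) is isomorphic to the group of all homomorphisms φ : N_G(S) → k^× whose kernel contains ρ^2(S). -/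
open Subgroup

/-- `T` is a Sylow `p`-subgroup of the subgroup `H` of `G`: a `p`-subgroup of `H`
that is maximal among the `p`-subgroups of `H`. -/
def IsSylowPSubgroupOf {G : Type*} [Group G] (p : ℕ) (T H : Subgroup G) : Prop :=
  T ≤ H ∧ IsPGroup p T ∧ ∀ U : Subgroup G, U ≤ H → IsPGroup p U → T ≤ U → U = T

/-- The Carlson–Thévenaz subgroups `ρ^i(P)`, relative to a choice `SP P` of a Sylow
`p`-subgroup of `N_G(P)` for each `P`: `ρ^1(P) = S_P·N_G(P)'` and
`ρ^{i+1}(P) = ⟨N_G(P) ∩ ρ^i(Q) : 1 < Q ≤ S⟩`. -/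
def rho {G : Type*} [Group G] (SP : Subgroup G → Subgroup G) (S : Subgroup G) :
    ℕ → Subgroup G → Subgroup G
  | 0, _ => ⊥
  | 1, P => SP P ⊔ ⁅Subgroup.normalizer (P : Set G), Subgroup.normalizer (P : Set G)⁆
  | (i + 2), P =>
      ⨆ Q ∈ {Q : Subgroup G | Q ≠ ⊥ ∧ Q ≤ S}, Subgroup.normalizer (P : Set G) ⊓ rho SP S (i + 1) Q

/-- The conjugate subgroup `gSg⁻¹`. -/
def conjSub {G : Type*} [Group G] (g : G) (S : Subgroup G) : Subgroup G :=
  Subgroup.map (MulAut.conj g).toMonoidHom S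

/-- `χ : G → kˣ` is a weak `S`-homomorphism of `G`. -/
def IsWeakSHom {G : Type*} [Group G] {k : Type*} [Field k]
    (S : Subgroup G) (χ : G → kˣ) : Prop :=
  (∀ g ∈ S, χ g = 1) ∧ (∀ g : G, S ⊓ conjSub g S = ⊥ → χ g = 1) ∧
    ∀ g h : G, S ⊓ conjSub g S ⊓ conjSub (g * h) S ≠ ⊥ → χ (g * h) = χ g * χ h

/-- The group of weak `S`-homomorphisms of `G`, under pointwise multiplication. -/
def weakSHomGroup {G : Type*} [Group G] (k : Type*) [Field k] (S : Subgroup G) :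
    Subgroup (G → kˣ) where
  carrier := {χ | IsWeakSHom S χ}
  one_mem' :=
    ⟨fun _ _ => rfl, fun _ _ => rfl, fun _ _ _ => (mul_one (1 : kˣ)).symm⟩
  mul_mem' := by
    rintro a b ⟨ha1, ha2, ha3⟩ ⟨hb1, hb2, hb3⟩
    refine ⟨fun g hg => ?_, fun g hg => ?_, fun g h hgh => ?_⟩
    · simp [Pi.mul_apply, ha1 g hg, hb1 g hg]
    · simp [Pi.mul_apply, ha2 g hg, hb2 g hg]
    · simp only [Pi.mul_apply, ha3 g h hgh, hb3 g h hgh]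
      exact mul_mul_mul_comm _ _ _ _
  inv_mem' := by
    rintro a ⟨h1, h2, h3⟩
    refine ⟨fun g hg => ?_, fun g hg => ?_, fun g h hgh => ?_⟩
    · simp [Pi.inv_apply, h1 g hg]
    · simp [Pi.inv_apply, h2 g hg]
    · simp [Pi.inv_apply, h3 g h hgh, mul_comm]

/-- The group of homomorphisms `N_G(S) → kˣ` whose kernel contains `ρ²(S)`. -/
def homsKillingRhoTwo {G : Type*} [Group G] (k : Type*) [Field k]
    (SP : Subgroup G → Subgroup G) (S : Subgroup G) : Subgroup (Subgroup.normalizer (S : Set G) →* kˣ) where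
  carrier := {φ | ∀ x : Subgroup.normalizer (S : Set G), (x : G) ∈ rho SP S 2 S → φ x = 1}
  one_mem' := fun _ _ => rfl
  mul_mem' := by
    intro a b ha hb x hx
    simp [MonoidHom.mul_apply, ha x hx, hb x hx]
  inv_mem' := by
    intro a ha x hx
    simp [MonoidHom.inv_apply, ha x hx]

/-! Restricting a weak `S`-homomorphism to `N_G(P)`, for `1 < P ≤ S`, gives a homomorphism to an
abelian group without `p`-torsion, which kills `ρ¹(P) = O^{p'}(N_G(P))·N_G(P)'`. Hence
restriction to `N_G(S)` lands in the homomorphisms that kill `ρ²(S)`, and the task is to invert it.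

By control of fusion, `g = hc` with `h ∈ N_G(S)` and `c` centralizing the set `E` of elements of
order dividing `p` in `S ∩ g⁻¹Sg`. Since `Ω₁(S)` is central in `S`, the Sylow subgroup `S` lies in
`C_G(E)` as well, so the Frattini argument turns this into `g ∈ n·O^{p'}(C_G(E))` with
`n ∈ N_G(S)`. For `1 ≠ z ∈ E` one has `O^{p'}(C_G(E)) ≤ O^{p'}(C_G(z)) ≤ ρ¹(⟨z⟩)`, so a weak
homomorphism `χ` must satisfy `χ(g) = χ(n)`, and conversely `χ(g) := φ(n)` does not depend on `n`
or `z` when `φ` kills `ρ²(S)`. The cosets `n·O^{p'}(C_G(z))` multiply compatibly with conjugation of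
`z`, which makes this extension of `φ` weakly multiplicative.
-/

section PTorsion

theorem eq_one_of_pow_pow_eq_one {M : Type*} [Monoid M] {p n : ℕ}
    (hM : ∀ x : M, x ^ p = 1 → x = 1) {x : M} (hx : x ^ p ^ n = 1) : x = 1 := by
  induction n with
  | zero => simpa only [pow_zero, pow_one] using hx
  | succ n ih => exact ih (hM _ (by rwa [← pow_mul, ← pow_succ]))

theorem exists_ne_one_pow_eq_one {G : Type*} [Group G] {p : ℕ} {Q : Subgroup G}
    (hQ : IsPGroup p Q) (hne : Q ≠ ⊥) : ∃ z ∈ Q, z ≠ 1 ∧ z ^ p = 1 := by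
  by_contra! hfree
  have hfreeQ : ∀ x : Q, x ^ p = 1 → x = 1 := fun x hx =>
    by_contra fun hx1 => hfree x x.2 (by simpa using hx1) (by exact_mod_cast hx)
  refine hne ((eq_bot_iff_forall Q).2 fun x hx => ?_)
  obtain ⟨n, hn⟩ := hQ ⟨x, hx⟩
  exact congrArg Subtype.val (eq_one_of_pow_pow_eq_one hfreeQ hn)

theorem units_eq_one_of_pow_char_eq_one {k : Type*} [Field k] {p : ℕ} [Fact p.Prime] [CharP k p]
    (u : kˣ) (hu : u ^ p = 1) : u = 1 :=
  Units.ext <| frobenius_inj k p <| by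
    rw [frobenius_def, ← Units.val_pow_eq_pow_val, hu, Units.val_one, map_one]

end PTorsion

section PPrimeResidual

variable {G : Type*} [Group G] {p : ℕ} {H K U : Subgroup G}

/-- The subgroup `O^{p'}(H)` of `H`, encoded as the subgroup generated by the elements of
`p`-power order of `H`. -/
def pPrimeResidual (p : ℕ) (H : Subgroup G) : Subgroup G :=
  closure {x | x ∈ H ∧ ∃ n : ℕ, x ^ p ^ n = 1}

theorem pPrimeResidual_mono (h : H ≤ K) : pPrimeResidual p H ≤ pPrimeResidual p K :=
  closure_mono fun _ hx => ⟨h hx.1, hx.2⟩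

theorem le_pPrimeResidual (hU : IsPGroup p U) (hUH : U ≤ H) : U ≤ pPrimeResidual p H := by
  intro u hu
  obtain ⟨n, hn⟩ := hU ⟨u, hu⟩
  exact subset_closure ⟨hUH hu, n, congrArg Subtype.val hn⟩

theorem map_pPrimeResidual_le {G' : Type*} [Group G'] (f : G →* G') (H : Subgroup G) :
    (pPrimeResidual p H).map f ≤ pPrimeResidual p (H.map f) := by
  rw [pPrimeResidual, MonoidHom.map_closure]
  refine closure_mono ?_
  rintro _ ⟨x, ⟨hx, n, hn⟩, rfl⟩
  exact ⟨mem_map_of_mem f hx, n, by rw [← map_pow, hn, map_one]⟩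

theorem inv_mul_mul_mem_pPrimeResidual_centralizer {z g x : G}
    (hx : x ∈ pPrimeResidual p (centralizer {g * z * g⁻¹})) :
    g⁻¹ * x * g ∈ pPrimeResidual p (centralizer {z}) := by
  let c : G →* G := (MulAut.conj g⁻¹).toMonoidHom
  have hle : (centralizer {g * z * g⁻¹}).map c ≤ centralizer {z} := by
    refine (map_centralizer_le_centralizer_image _ c).trans_eq ?_
    simp [c, mul_assoc]
  simpa [c] using pPrimeResidual_mono hle (map_pPrimeResidual_le c _ (mem_map_of_mem c hx))

theorem pPrimeResidual_centralizer_le_normalizer_zpowers (z : G) :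
    pPrimeResidual p (centralizer {z}) ≤ pPrimeResidual p (normalizer (zpowers z : Set G)) := by
  rw [← centralizer_closure, ← zpowers_eq_closure]
  exact pPrimeResidual_mono (centralizer_le_normalizer _)

theorem pPrimeResidual_sup_commutator_le_map_ker {A : Type*} [CommGroup A]
    (hA : ∀ a : A, a ^ p = 1 → a = 1) (f : H →* A) :
    pPrimeResidual p H ⊔ ⁅H, H⁆ ≤ f.ker.map H.subtype := by
  refine sup_le ((closure_le _).2 ?_) ?_
  · rintro x ⟨hxH, n, hn⟩
    have hx : (⟨x, hxH⟩ : H) ^ p ^ n = 1 := Subtype.ext hn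
    exact ⟨⟨x, hxH⟩, eq_one_of_pow_pow_eq_one hA (by rw [← map_pow, hx, map_one]), rfl⟩
  · rw [← map_subtype_commutator]
    exact map_mono (Abelianization.commutator_subset_ker f)

-- The Frattini argument for `S` in the normal subgroup `O^{p'}(H)` of `H`.
theorem exists_normalizer_inv_mul_mem_pPrimeResidual [Fact p.Prime] [Finite (Sylow p G)]
    {S : Sylow p G} (hSH : (S : Subgroup G) ≤ H) {c : G} (hc : c ∈ H) :
    ∃ n ∈ normalizer ((S : Subgroup G) : Set G), n⁻¹ * c ∈ pPrimeResidual p H := by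
  have hS : (S : Subgroup G) ≤ pPrimeResidual p H := le_pPrimeResidual S.isPGroup' hSH
  have hcS : ((c⁻¹ • S : Sylow p G) : Subgroup G) ≤ pPrimeResidual p H :=
    le_pPrimeResidual (c⁻¹ • S).isPGroup' (Sylow.smul_le hSH ⟨c⁻¹, inv_mem hc⟩)
  obtain ⟨l, hl⟩ := MulAction.exists_smul_eq (pPrimeResidual p H)
    ((c⁻¹ • S).subtype hcS) (S.subtype hS)
  have hfix : ((l : G) * c⁻¹) • S = S := by
    rw [Sylow.smul_subtype] at hl
    rw [mul_smul]
    exact Sylow.subtype_injective hl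
  have hn : (l : G) * c⁻¹ ∈ normalizer ((S : Subgroup G) : Set G) :=
    Sylow.smul_eq_iff_mem_normalizer.1 hfix
  exact ⟨(l * c⁻¹)⁻¹, inv_mem hn, by simp⟩

end PPrimeResidual

namespace IsSylowPSubgroupOf

variable {G : Type*} [Group G] {p : ℕ} {T H : Subgroup G}

/-- A Sylow `p`-subgroup of the subgroup `H`, as a term of Mathlib's `Sylow p H`. -/
def toSylow (hT : IsSylowPSubgroupOf p T H) : Sylow p H where
  toSubgroup := T.subgroupOf H
  isPGroup' := hT.2.1.comap_subtype
  is_maximal' {Q} hQ hle := by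
    have hmap : Q.map H.subtype = T := hT.2.2 _ (map_subtype_le Q) (hQ.map _) fun t ht =>
      ⟨⟨t, hT.1 ht⟩, hle ht, rfl⟩
    rw [← hmap]
    exact (comap_map_eq_self_of_injective H.subtype_injective Q).symm

open scoped commutatorElement in
-- A `p`-element of `H` is conjugate in `H` to some `t ∈ T`, so differs from `t` by a commutator.
theorem pPrimeResidual_le_sup_commutator [Fact p.Prime] [Finite (Sylow p H)]
    (hT : IsSylowPSubgroupOf p T H) : pPrimeResidual p H ≤ T ⊔ ⁅H, H⁆ := by
  rw [pPrimeResidual, closure_le]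
  rintro x ⟨hxH, n, hn⟩
  have hx : IsPGroup p (zpowers (⟨x, hxH⟩ : H)) := IsPGroup.of_card_dvd_pow <| by
    rw [Nat.card_zpowers]
    exact orderOf_dvd_of_pow_eq_one (Subtype.ext hn)
  obtain ⟨R, hR⟩ := hx.exists_le_sylow
  obtain ⟨h, rfl⟩ := MulAction.exists_smul_eq H hT.toSylow R
  obtain ⟨t, ht, hconj⟩ := hR (mem_zpowers _)
  have hxt : x = ⁅(h : G), (t : G)⁆ * t := by
    rw [commutatorElement_def, inv_mul_cancel_right]
    exact (congrArg Subtype.val hconj).symm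
  rw [hxt]
  exact mul_mem (mem_sup_right (commutator_mem_commutator h.2 t.2)) (mem_sup_left ht)

theorem sup_commutator_eq [Fact p.Prime] [Finite (Sylow p H)] (hT : IsSylowPSubgroupOf p T H) :
    T ⊔ ⁅H, H⁆ = pPrimeResidual p H ⊔ ⁅H, H⁆ :=
  le_antisymm (sup_le_sup_right (le_pPrimeResidual hT.2.1 hT.1) _)
    (sup_le hT.pPrimeResidual_le_sup_commutator le_sup_right)

end IsSylowPSubgroupOf

section Rho

variable {G : Type*} [Group G] {p : ℕ} {SP : Subgroup G → Subgroup G} {S P : Subgroup G}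

theorem rho_one_eq [Fact p.Prime] [Finite (Sylow p G)]
    (hP : IsSylowPSubgroupOf p (SP P) (normalizer (P : Set G))) :
    rho SP S 1 P = pPrimeResidual p (normalizer (P : Set G)) ⊔
      ⁅normalizer (P : Set G), normalizer (P : Set G)⁆ :=
  hP.sup_commutator_eq

theorem normalizer_inf_rho_one_le_rho_two (hP : P ≠ ⊥) (hPS : P ≤ S) :
    normalizer (S : Set G) ⊓ rho SP S 1 P ≤ rho SP S 2 S :=
  le_iSup₂_of_le (f := fun Q (_ : Q ∈ {Q : Subgroup G | Q ≠ ⊥ ∧ Q ≤ S}) =>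
    normalizer (S : Set G) ⊓ rho SP S 1 Q) P ⟨hP, hPS⟩ le_rfl

end Rho

section Fusion

variable {G : Type*} [Group G] {p : ℕ} {S P : Subgroup G} {g h x z : G}

theorem mem_conjSub_iff : x ∈ conjSub g S ↔ g⁻¹ * x * g ∈ S :=
  (mem_map_equiv (f := MulAut.conj g)).trans (by simp)

theorem conjSub_eq_self (hg : g ∈ normalizer (P : Set G)) : conjSub g P = P :=
  mem_normalizer_iff_map_conj_eq.1 hg

/-- The elements of order dividing `p` in `S ∩ g⁻¹Sg`. -/
def fusedTorsion (p : ℕ) (S : Subgroup G) (g : G) : Set G :=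
  {z | z ^ p = 1 ∧ z ∈ S ∧ g * z * g⁻¹ ∈ S}

theorem fusedTorsion_subset : fusedTorsion p S g ⊆ (S ⊓ conjSub g⁻¹ S : Subgroup G) :=
  fun _ hz => ⟨hz.2.1, mem_conjSub_iff.2 (by simpa using hz.2.2)⟩

theorem exists_mem_fusedTorsion_mul (hS : IsPGroup p S)
    (hgh : S ⊓ conjSub g S ⊓ conjSub (g * h) S ≠ ⊥) :
    ∃ z ≠ 1, z ∈ fusedTorsion p S h ∧ h * z * h⁻¹ ∈ fusedTorsion p S g ∧
      z ∈ fusedTorsion p S (g * h) := by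
  obtain ⟨y, ⟨⟨hyS, hyg⟩, hygh⟩, hy1, hyp⟩ :=
    exists_ne_one_pow_eq_one (hS.to_le (inf_le_left.trans inf_le_left)) hgh
  obtain ⟨z, rfl⟩ : ∃ z, y = g * h * z * (g * h)⁻¹ := ⟨(g * h)⁻¹ * y * (g * h), by group⟩
  have hz1 : z ≠ 1 := by rwa [Ne, conj_eq_one_iff] at hy1
  have hzp : z ^ p = 1 := by rwa [conj_pow, conj_eq_one_iff] at hyp
  have hzS : z ∈ S := by simpa [mul_assoc] using mem_conjSub_iff.1 hygh
  have hzh : h * z * h⁻¹ ∈ S := by simpa [mul_assoc] using mem_conjSub_iff.1 hyg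
  refine ⟨z, hz1, ⟨hzp, hzS, hzh⟩, ⟨?_, hzh, ?_⟩, hzp, hzS, hyS⟩
  · rw [conj_pow, hzp, mul_one, mul_inv_cancel]
  · simpa [mul_assoc] using hyS

theorem inf_conjSub_ne_bot_iff (hS : IsPGroup p S) :
    S ⊓ conjSub g S ≠ ⊥ ↔ ∃ z ≠ 1, z ∈ fusedTorsion p S g := by
  constructor
  · intro hg
    have hg1 : S ⊓ conjSub g S ⊓ conjSub (g * 1) S ≠ ⊥ := by rwa [mul_one, inf_assoc, inf_idem]
    obtain ⟨z, hz1, -, -, hz⟩ := exists_mem_fusedTorsion_mul hS hg1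
    exact ⟨z, hz1, by rwa [mul_one] at hz⟩
  · rintro ⟨z, hz1, -, hzS, hgz⟩ hbot
    have hmem : g * z * g⁻¹ ∈ S ⊓ conjSub g S :=
      ⟨hgz, mem_conjSub_iff.2 (by simpa [mul_assoc] using hzS)⟩
    rw [hbot, mem_bot, conj_eq_one_iff] at hmem
    exact hz1 hmem

theorem mem_fusedTorsion_of_mem_normalizer (hg : g ∈ normalizer (S : Set G)) (hz : z ∈ S)
    (hzp : z ^ p = 1) : z ∈ fusedTorsion p S g :=
  ⟨hzp, hz, (mem_normalizer_iff.1 hg z).1 hz⟩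

/-- The elements `a` and `b` lie in the same left coset of `O^{p'}(C_G(z))`. This is the relation
by which an arbitrary element of `G` is replaced by an element of `N_G(S)`. -/
def AgreeAt (p : ℕ) (z a b : G) : Prop :=
  (a : G ⧸ pPrimeResidual p (centralizer {z})) = b

theorem agreeAt_iff {a b : G} :
    AgreeAt p z a b ↔ a⁻¹ * b ∈ pPrimeResidual p (centralizer {z}) :=
  QuotientGroup.eq

theorem AgreeAt.mul {a b : G} (ha : AgreeAt p (h * z * h⁻¹) a g) (hb : AgreeAt p z b h) :
    AgreeAt p z (a * b) (g * h) := by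
  rw [agreeAt_iff] at *
  have hprod : (a * b)⁻¹ * (g * h) = b⁻¹ * h * (h⁻¹ * (a⁻¹ * g) * h) := by group
  rw [hprod]
  exact mul_mem hb (inv_mul_mul_mem_pPrimeResidual_centralizer ha)

/-- A choice, for each `g`, of an element of `N_G(S)` that agrees with `g` at every element of
order dividing `p` in `S ∩ g⁻¹Sg`. -/
def IsFusionSection (p : ℕ) (S : Subgroup G) (ν : G → normalizer (S : Set G)) : Prop :=
  ∀ g, ∀ z ∈ fusedTorsion p S g, AgreeAt p z (ν g) g

theorem exists_isFusionSection [Fact p.Prime] [Finite (Sylow p G)] {S : Sylow p G}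
    (hcen : omega1 p (S : Subgroup G) ≤ centralizer ((S : Subgroup G) : Set G))
    (hfus : ControlsPFusion (S : Subgroup G) (normalizer ((S : Subgroup G) : Set G))) :
    ∃ ν, IsFusionSection p (S : Subgroup G) ν := by
  suffices h : ∀ g, ∃ n : normalizer ((S : Subgroup G) : Set G),
      ∀ z ∈ fusedTorsion p (S : Subgroup G) g, AgreeAt p z n g by
    choose ν hν using h
    exact ⟨ν, hν⟩
  intro g
  obtain ⟨h, hh, c, hc, rfl⟩ := hfus ((S : Subgroup G) ⊓ conjSub g⁻¹ S) inf_le_left g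
    fun q hq => by simpa using mem_conjSub_iff.1 hq.2
  have hSE : (S : Subgroup G) ≤ centralizer (fusedTorsion p (S : Subgroup G) (h * c)) :=
    (le_centralizer_iff.1 hcen).trans
      (centralizer_le fun z hz => subset_closure ⟨hz.2.1, hz.1⟩)
  have hcE : c ∈ centralizer (fusedTorsion p (S : Subgroup G) (h * c)) :=
    centralizer_le fusedTorsion_subset hc
  obtain ⟨n, hn, hnc⟩ := exists_normalizer_inv_mul_mem_pPrimeResidual hSE hcE
  refine ⟨⟨h * n, mul_mem hh hn⟩, fun z hz => agreeAt_iff.2 ?_⟩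
  have hcancel : (h * n)⁻¹ * (h * c) = n⁻¹ * c := by group
  rw [hcancel]
  exact pPrimeResidual_mono (centralizer_le (Set.singleton_subset_iff.2 hz)) hnc

end Fusion

namespace IsWeakSHom

variable {G : Type*} [Group G] {k : Type*} [Field k] {p : ℕ} {S P : Subgroup G} {χ : G → kˣ}
  {SP : Subgroup G → Subgroup G}

/-- The restriction of a weak `S`-homomorphism to `N_G(P)` for `1 < P ≤ S`, which is a genuine
homomorphism because `P` lies in all the intersections of conjugates of `S` involved. -/
def restrictNormalizer (hχ : IsWeakSHom S χ) (hP : P ≠ ⊥) (hPS : P ≤ S) :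
    normalizer (P : Set G) →* kˣ where
  toFun x := χ x
  map_one' := hχ.1 1 (one_mem S)
  map_mul' x y := by
    have hle : ∀ n ∈ normalizer (P : Set G), P ≤ conjSub n S := fun n hn =>
      (conjSub_eq_self hn).ge.trans (map_mono hPS)
    exact hχ.2.2 x y (ne_bot_of_le_ne_bot hP
      (le_inf (le_inf hPS (hle x x.2)) (hle _ (mul_mem x.2 y.2))))

theorem eq_one_of_mem_pPrimeResidual_sup_commutator (hχ : IsWeakSHom S χ)
    (hk : ∀ u : kˣ, u ^ p = 1 → u = 1) (hP : P ≠ ⊥) (hPS : P ≤ S) {x : G}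
    (hx : x ∈ pPrimeResidual p (normalizer (P : Set G)) ⊔
      ⁅normalizer (P : Set G), normalizer (P : Set G)⁆) : χ x = 1 := by
  obtain ⟨y, hy, rfl⟩ :=
    pPrimeResidual_sup_commutator_le_map_ker hk (hχ.restrictNormalizer hP hPS) hx
  exact hy

theorem eq_one_of_mem_rho_two [Fact p.Prime] [Finite (Sylow p G)] (hχ : IsWeakSHom S χ)
    (hk : ∀ u : kˣ, u ^ p = 1 → u = 1)
    (hSP : ∀ P : Subgroup G, IsSylowPSubgroupOf p (SP P) (normalizer (P : Set G)))
    (hS : S ≠ ⊥) {x : G} (hx : x ∈ rho SP S 2 S) : χ x = 1 := by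
  have hle : rho SP S 2 S ≤ (hχ.restrictNormalizer hS le_rfl).ker.map (Subgroup.subtype _) := by
    refine iSup₂_le fun P hP y hy => ⟨⟨y, hy.1⟩, ?_, rfl⟩
    exact hχ.eq_one_of_mem_pPrimeResidual_sup_commutator hk hP.1 hP.2
      ((rho_one_eq (hSP P)).le hy.2)
  obtain ⟨y, hy, rfl⟩ := hle hx
  exact hy

theorem apply_eq_of_agreeAt (hχ : IsWeakSHom S χ) (hk : ∀ u : kˣ, u ^ p = 1 → u = 1)
    (hS : IsPGroup p S) {g n z : G} (hn : n ∈ normalizer (S : Set G)) (hz1 : z ≠ 1)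
    (hz : z ∈ fusedTorsion p S g) (hzn : AgreeAt p z n g) : χ g = χ n := by
  have hker : χ (n⁻¹ * g) = 1 :=
    hχ.eq_one_of_mem_pPrimeResidual_sup_commutator hk (zpowers_ne_bot.2 hz1) (zpowers_le.2 hz.2.1)
      (mem_sup_left (pPrimeResidual_centralizer_le_normalizer_zpowers z (agreeAt_iff.1 hzn)))
  have hmul : χ (n * (n⁻¹ * g)) = χ n * χ (n⁻¹ * g) := by
    refine hχ.2.2 n _ ?_
    rw [mul_inv_cancel_left, conjSub_eq_self hn, inf_idem]
    exact (inf_conjSub_ne_bot_iff hS).2 ⟨z, hz1, hz⟩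
  rwa [mul_inv_cancel_left, hker, mul_one] at hmul

end IsWeakSHom

section Extension

variable {G : Type*} [Group G] {k : Type*} [Field k] {p : ℕ} {S : Subgroup G}
  {SP : Subgroup G → Subgroup G} {ν : G → normalizer (S : Set G)}
  {φ : normalizer (S : Set G) →* kˣ}

theorem apply_eq_of_agreeAt_of_mem_homsKillingRhoTwo [Fact p.Prime] [Finite (Sylow p G)]
    (hφ : φ ∈ homsKillingRhoTwo k SP S)
    (hSP : ∀ P : Subgroup G, IsSylowPSubgroupOf p (SP P) (normalizer (P : Set G)))
    {a b : normalizer (S : Set G)} {z : G} (hz1 : z ≠ 1) (hzS : z ∈ S)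
    (hab : AgreeAt p z (a : G) b) : φ a = φ b := by
  have hker : φ (a⁻¹ * b) = 1 := by
    refine hφ _ (normalizer_inf_rho_one_le_rho_two (zpowers_ne_bot.2 hz1) (zpowers_le.2 hzS)
      ⟨(a⁻¹ * b).2, ?_⟩)
    rw [rho_one_eq (hSP _)]
    exact mem_sup_left
      (pPrimeResidual_centralizer_le_normalizer_zpowers z (agreeAt_iff.1 hab))
  rwa [map_mul, map_inv, inv_mul_eq_one] at hker

open Classical in
/-- The extension of `φ : N_G(S) → kˣ` to a function on `G` along `ν : G → N_G(S)`, set to `1`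
where `S` and `gSg⁻¹` intersect trivially. -/
noncomputable def extendAlong (φ : normalizer (S : Set G) →* kˣ)
    (ν : G → normalizer (S : Set G)) (g : G) : kˣ :=
  if S ⊓ conjSub g S = ⊥ then 1 else φ (ν g)

section

variable [Fact p.Prime] [Finite (Sylow p G)] (hφ : φ ∈ homsKillingRhoTwo k SP S)
  (hSP : ∀ P : Subgroup G, IsSylowPSubgroupOf p (SP P) (normalizer (P : Set G)))
  (hS : IsPGroup p S) (hν : IsFusionSection p S ν)

include hφ hSP hS hν

theorem extendAlong_eq_of_agreeAt {g z : G} {n : normalizer (S : Set G)} (hz1 : z ≠ 1)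
    (hz : z ∈ fusedTorsion p S g) (hzn : AgreeAt p z n g) : extendAlong φ ν g = φ n := by
  rw [extendAlong, if_neg ((inf_conjSub_ne_bot_iff hS).2 ⟨z, hz1, hz⟩)]
  exact apply_eq_of_agreeAt_of_mem_homsKillingRhoTwo hφ hSP hz1 hz.2.1 ((hν g z hz).trans hzn.symm)

theorem extendAlong_coe (hne : S ≠ ⊥) (n : normalizer (S : Set G)) :
    extendAlong φ ν n = φ n := by
  obtain ⟨z, hzS, hz1, hzp⟩ := exists_ne_one_pow_eq_one hS hne
  exact extendAlong_eq_of_agreeAt hφ hSP hS hν hz1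
    (mem_fusedTorsion_of_mem_normalizer n.2 hzS hzp) rfl

theorem isWeakSHom_extendAlong (hne : S ≠ ⊥) : IsWeakSHom S (extendAlong φ ν) := by
  refine ⟨fun s hs => ?_, fun g hg => if_pos hg, fun g h hgh => ?_⟩
  · have hsN := le_normalizer hs
    rw [extendAlong_coe hφ hSP hS hν hne ⟨s, hsN⟩]
    refine hφ _ (normalizer_inf_rho_one_le_rho_two hne le_rfl ⟨hsN, ?_⟩)
    rw [rho_one_eq (hSP S)]
    exact mem_sup_left (le_pPrimeResidual hS le_normalizer hs)
  · obtain ⟨z, hz1, hzh, hzg, hzgh⟩ := exists_mem_fusedTorsion_mul hS hgh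
    have hhz1 : h * z * h⁻¹ ≠ 1 := by rwa [Ne, conj_eq_one_iff]
    have hνmul : AgreeAt p z (ν g * ν h : normalizer (S : Set G)) (g * h) :=
      (hν g _ hzg).mul (hν h z hzh)
    rw [extendAlong_eq_of_agreeAt hφ hSP hS hν hz1 hzgh hνmul, map_mul,
      extendAlong_eq_of_agreeAt hφ hSP hS hν hhz1 hzg (hν g _ hzg),
      extendAlong_eq_of_agreeAt hφ hSP hS hν hz1 hzh (hν h z hzh)]

end

theorem IsWeakSHom.extendAlong_restrictNormalizer {χ : G → kˣ} (hχ : IsWeakSHom S χ)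
    (hk : ∀ u : kˣ, u ^ p = 1 → u = 1) (hS : IsPGroup p S) (hν : IsFusionSection p S ν)
    (hne : S ≠ ⊥) : extendAlong (hχ.restrictNormalizer hne le_rfl) ν = χ := by
  funext g
  rw [extendAlong]
  split_ifs with hg
  · exact (hχ.2.1 g hg).symm
  · obtain ⟨z, hz1, hz⟩ := (inf_conjSub_ne_bot_iff hS).1 hg
    exact (hχ.apply_eq_of_agreeAt hk hS (ν g).2 hz1 hz (hν g z hz)).symm

end Extension

theorem stmt7_general {G : Type*} [Group G] (p : ℕ) [Fact p.Prime] [Finite (Sylow p G)]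
    (k : Type*) [Field k] (hk : ∀ u : kˣ, u ^ p = 1 → u = 1)
    (S : Sylow p G) (hS : (S : Subgroup G) ≠ ⊥)
    (hcen : omega1 p (S : Subgroup G) ≤
      (S : Subgroup G) ⊓ Subgroup.centralizer ((S : Subgroup G) : Set G))
    (hfus : ControlsPFusion (S : Subgroup G) (Subgroup.normalizer ((S : Subgroup G) : Set G)))
    (SP : Subgroup G → Subgroup G)
    (hSP : ∀ P : Subgroup G, IsSylowPSubgroupOf p (SP P) (Subgroup.normalizer (P : Set G))) :
    Nonempty ((weakSHomGroup k (S : Subgroup G)) ≃*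
      (homsKillingRhoTwo k SP (S : Subgroup G))) := by
  obtain ⟨ν, hν⟩ := exists_isFusionSection (hcen.trans inf_le_right) hfus
  have hSp := S.isPGroup'
  exact ⟨{
    toFun := fun χ => ⟨χ.2.restrictNormalizer hS le_rfl,
      fun _ hx => χ.2.eq_one_of_mem_rho_two hk hSP hS hx⟩
    invFun := fun φ => ⟨extendAlong φ.1 ν, isWeakSHom_extendAlong φ.2 hSP hSp hν hS⟩
    left_inv := fun χ => Subtype.ext (χ.2.extendAlong_restrictNormalizer hk hSp hν hS)
    right_inv := fun φ => Subtype.ext (MonoidHom.ext (extendAlong_coe φ.2 hSP hSp hν hS))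
    map_mul' := fun _ _ => rfl }⟩

theorem stmt7 {G : Type*} [Group G] [Fintype G] (p : ℕ) [Fact p.Prime]
    (hdvd : p ∣ Fintype.card G) (k : Type*) [Field k] [CharP k p]
    (S : Sylow p G)
    (hcen : omega1 p (S : Subgroup G) ≤
      (S : Subgroup G) ⊓ Subgroup.centralizer ((S : Subgroup G) : Set G))
    (hfus : ControlsPFusion (S : Subgroup G) (Subgroup.normalizer ((S : Subgroup G) : Set G)))
    (SP : Subgroup G → Subgroup G)
    (hSP : ∀ P : Subgroup G, IsSylowPSubgroupOf p (SP P) (Subgroup.normalizer (P : Set G))) :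
    Nonempty ((weakSHomGroup k (S : Subgroup G)) ≃*
      (homsKillingRhoTwo k SP (S : Subgroup G))) :=
  stmt7_general p k units_eq_one_of_pow_char_eq_one S
    (S.ne_bot_of_dvd_card (by rwa [Nat.card_eq_fintype_card])) hcen hfus SP hSP
end

section
/- Let p be an odd prime and let G be a finite group of order divisible by p whose Sylow p-subgroup S is metacyclic. Then N_G(S) controls p-fusion in G. -/
open Subgroup

/-- A group is metacyclic if it has a cyclic normal subgroup with cyclic quotient. -/
def IsMetacyclic (H : Type*) [Group H] : Prop :=
  ∃ N : Subgroup H, ∃ _ : N.Normal, IsCyclic N ∧ IsCyclic (H ⧸ N)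

/-!
By an Alperin-type induction on `|S| - |R|` it suffices to realise the conjugations by `N_G(R)` in
`N_G(S)` for `R < S` fully normalized, that is, with `T = S ∩ N_G(R)` a Sylow `p`-subgroup of
`N = N_G(R)`. For this one finds a subgroup `Q` of `T`, strictly larger than `R`, such that
`N = C_N(R) N_N(Q)`: an element of `N` then acts on `R` like an element of `N_N(Q)`, which the
induction hypothesis for `Q` realises in `N_G(S)`.

Let `K = C_N(R / Φ(R))`. It induces a `p`-group of automorphisms on `R`, so if `T ∩ K` is not
contained in `R`, a Frattini argument shows that `Q = (T ∩ K) R` has the required property.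
Otherwise `V = R / Φ(R)`, an elementary abelian section of a metacyclic group, has order at most
`p ^ 2`, and it contains its centralizer in the metacyclic group `T / Φ(R)`. If `T K` is normal in
`N`, the Frattini argument applies to `Q = T`. If it is not, then two non-proportional transvections
in the image of `N` in `Aut V` generate an element acting as `-1` on `V`; as `p` is odd, this forces
`T / Φ(R)` to have exponent `p`. A metacyclic group of exponent `p` is abelian, so that
`T / Φ(R)` centralizes `V` and `T = R`, a contradiction.
-/

namespace IsMetacyclic

variable {H K : Type*} [Group H] [Group K]

theorem of_injective (f : H →* K) (hf : Function.Injective f) (hK : IsMetacyclic K) :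
    IsMetacyclic H := by
  obtain ⟨N, _, hN, hquot⟩ := hK
  refine ⟨N.comap f, inferInstance, isCyclic_of_injective (f.subgroupComap N) ?_,
    isCyclic_of_injective (QuotientGroup.map (N.comap f) N f le_rfl) ?_⟩
  · exact fun x y hxy ↦ Subtype.ext (hf (congrArg Subtype.val hxy))
  · rw [← MonoidHom.ker_eq_bot_iff, QuotientGroup.ker_map]
    exact QuotientGroup.map_mk'_self _

theorem of_surjective (f : H →* K) (hf : Function.Surjective f) (hH : IsMetacyclic H) :
    IsMetacyclic K := by
  obtain ⟨N, hnormal, hN, hquot⟩ := hH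
  have hmap : (N.map f).Normal := hnormal.map f hf
  refine ⟨N.map f, hmap, isCyclic_of_surjective (f.subgroupMap N) (f.subgroupMap_surjective N),
    isCyclic_of_surjective (QuotientGroup.map N (N.map f) f (le_comap_map f N)) ?_⟩
  exact QuotientGroup.map_surjective_of_surjective _ _ _
    ((QuotientGroup.mk'_surjective _).comp hf) _

theorem natCard_dvd_sq {n : ℕ} (hH : IsMetacyclic H) (hn : ∀ x : H, x ^ n = 1) :
    Nat.card H ∣ n ^ 2 := by
  obtain ⟨N, _, hN, hquot⟩ := hH
  rw [card_eq_card_quotient_mul_card_subgroup N, sq, ← IsCyclic.exponent_eq_card,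
    ← IsCyclic.exponent_eq_card]
  refine mul_dvd_mul (Monoid.exponent_dvd_of_forall_pow_eq_one fun x ↦ ?_)
    (Monoid.exponent_dvd_of_forall_pow_eq_one fun x ↦ Subtype.ext (hn x))
  obtain ⟨k, rfl⟩ := QuotientGroup.mk_surjective x
  rw [← QuotientGroup.mk_pow, hn, QuotientGroup.mk_one]

theorem isMulCommutative {p : ℕ} [Fact p.Prime] (hH : IsMetacyclic H) (hp : ∀ x : H, x ^ p = 1) :
    IsMulCommutative H := by
  obtain ⟨i, hi, hcard⟩ := (Nat.dvd_prime_pow Fact.out).1 (hH.natCard_dvd_sq hp)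
  interval_cases i
  · have : Subsingleton H := (Nat.card_eq_one_iff_unique.1 (by simpa using hcard)).1
    infer_instance
  · have : IsCyclic H := isCyclic_of_prime_card (p := p) (by simpa using hcard)
    infer_instance
  · exact IsPGroup.isMulCommutative_of_card_eq_prime_sq hcard

end IsMetacyclic

section Unipotent

open Matrix Module

theorem exists_eq_of_isNilpotent_fin_two {K : Type*} [Field K] {z : Matrix (Fin 2) (Fin 2) K}
    (hz : IsNilpotent z) : ∃ a b c, z = !![a, b; c, -a] ∧ a ^ 2 + b * c = 0 := by
  have htr : z 0 0 + z 1 1 = 0 :=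
    (trace_fin_two z).symm.trans (isNilpotent_trace_of_isNilpotent hz).eq_zero
  have hdet : z 0 0 * z 1 1 - z 0 1 * z 1 0 = 0 := by
    obtain ⟨k, hk⟩ := hz
    rw [← det_fin_two]
    exact eq_zero_of_pow_eq_zero (n := k) (by rw [← det_pow, hk, det_zero])
  have hneg : z 1 1 = -z 0 0 := (neg_eq_of_add_eq_zero_right htr).symm
  refine ⟨z 0 0, z 0 1, z 1 0, ?_, by linear_combination -hdet + z 0 0 * htr⟩
  rw [← hneg]
  exact eta_fin_two z

theorem exists_eq_smul_or_anticommutator_matrix {K : Type*} [Field K]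
    {x y : Matrix (Fin 2) (Fin 2) K} (hx : IsNilpotent x) (hy : IsNilpotent y) (hx0 : x ≠ 0) :
    (∃ c : K, y = c • x) ∨ ∃ c : K, c ≠ 0 ∧ x * y + y * x = c • 1 := by
  obtain ⟨a, b, c, rfl, hxdet⟩ := exists_eq_of_isNilpotent_fin_two hx
  obtain ⟨a', b', c', rfl, hydet⟩ := exists_eq_of_isNilpotent_fin_two hy
  -- For traceless `2 × 2` matrices `x * y + y * x` is the scalar `tr (x * y)`, computed here.
  by_cases hs : 2 * a * a' + b * c' + b' * c = 0
  · left
    by_cases hb : b = 0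
    · subst hb
      obtain rfl : a = 0 := by simpa using hxdet
      have hc : c ≠ 0 := by
        rintro rfl
        exact hx0 (by ext i j; fin_cases i <;> fin_cases j <;> simp)
      obtain rfl : b' = 0 := by simpa [hc] using hs
      obtain rfl : a' = 0 := by simpa using hydet
      exact ⟨c' / c, by simp [hc]⟩
    · have hab : a * b' - a' * b = 0 := by
        apply pow_eq_zero_iff two_ne_zero |>.1
        linear_combination b' ^ 2 * hxdet + b ^ 2 * hydet - b * b' * hs
      have hbc : b * c' - b' * c = 0 := by
        apply pow_eq_zero_iff two_ne_zero |>.1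
        linear_combination (b * c' + b' * c - 2 * a * a') * hs + 4 * a ^ 2 * hydet
          - 4 * b' * c' * hxdet
      refine ⟨b' / b, ?_⟩
      simp only [smul_of, smul_cons, smul_eq_mul, smul_empty,
        EmbeddingLike.apply_eq_iff_eq, vecCons_inj]
      field_simp
      grind
  · refine .inr ⟨_, hs, ?_⟩
    ext i j
    fin_cases i <;> fin_cases j <;> simp <;> ring

theorem exists_eq_smul_or_anticommutator {K W : Type*} [Field K] [AddCommGroup W] [Module K W]
    (hW : finrank K W = 2) {x y : End K W} (hx : IsNilpotent x) (hy : IsNilpotent y) (hx0 : x ≠ 0) :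
    (∃ c : K, y = c • x) ∨ ∃ c : K, c ≠ 0 ∧ x * y + y * x = c • 1 := by
  have : Module.Finite K W := finite_of_finrank_eq_succ hW
  let e := LinearMap.toMatrixAlgEquiv (finBasisOfFinrankEq K W hW)
  have hinj := e.injective
  refine (exists_eq_smul_or_anticommutator_matrix (hx.map e) (hy.map e)
    (by simpa using hx0)).imp ?_ ?_
  · rintro ⟨c, hc⟩
    exact ⟨c, hinj (by simpa using hc)⟩
  · rintro ⟨c, hc0, hc⟩
    exact ⟨c, hc0, hinj (by simpa using hc)⟩

theorem pow_finrank_eq_zero_of_isNilpotent {K W : Type*} [Field K] [AddCommGroup W] [Module K W]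
    [FiniteDimensional K W] {x : End K W} (hx : IsNilpotent x) : x ^ finrank K W = 0 := by
  simpa [hx.charpoly_eq_X_pow_finrank] using LinearMap.aeval_self_charpoly x

theorem one_add_pow_of_sq_eq_zero {A : Type*} [Ring A] {x : A} (hx : x ^ 2 = 0) (n : ℕ) :
    (1 + x) ^ n = 1 + n • x := by
  induction n with
  | zero => simp
  | succ n ih =>
    rw [pow_succ, ih, mul_add, mul_one, add_mul, one_mul, smul_mul_assoc, ← sq, hx, succ_nsmul]
    simp [add_assoc]

/-- The model case is `x = !![0, 1; 0, 0]` and `y = !![0, 0; -1, 0]`, where the threefold product is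
the Weyl element `!![0, 1; -1, 0]`. -/
theorem sq_one_add_mul_one_add_mul_one_add {A : Type*} [Ring A] {x y : A} (hx : x ^ 2 = 0)
    (hy : y ^ 2 = 0) (hxy : x * y + y * x = -1) : ((1 + x) * (1 + y) * (1 + x)) ^ 2 = -1 := by
  have hyx : y * x = -1 - x * y := by rw [← hxy]; abel
  have hxyx : x * y * x = -x := by rw [mul_assoc, hyx, mul_sub, ← mul_assoc, ← sq, hx]; simp
  have hprod : (1 + x) * (1 + y) * (1 + x) = x + y := by
    calc (1 + x) * (1 + y) * (1 + x)
      _ = 1 + 2 * x + x ^ 2 + y + (x * y + y * x) + x * y * x := by noncomm_ring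
      _ = x + y := by rw [hx, hxy, hxyx]; noncomm_ring
  rw [hprod, ← hxy]
  calc (x + y) ^ 2 = x ^ 2 + y ^ 2 + (x * y + y * x) := by noncomm_ring
    _ = x * y + y * x := by rw [hx, hy]; simp

theorem isNilpotent_sub_one_of_pow_eq_one {A : Type*} [Ring A] {p : ℕ} [Fact p.Prime]
    [Algebra (ZMod p) A] {a : A} {n : ℕ} (ha : a ^ p ^ n = 1) : IsNilpotent (a - 1) := by
  nontriviality A
  have : CharP A p := charP_of_injective_algebraMap (algebraMap (ZMod p) A).injective p
  exact ⟨p ^ n, by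
    rw [sub_pow_char_pow_of_commute p n (Commute.one_right a), ha, one_pow, sub_self]⟩

theorem eq_pow_or_exists_sq_eq_neg_one {p : ℕ} [Fact p.Prime] {W : Type*} [AddCommGroup W]
    [Module (ZMod p) W] [FiniteDimensional (ZMod p) W] (hW : finrank (ZMod p) W ≤ 2)
    {a b : End (ZMod p) W} {m n : ℕ} (ha : a ^ p ^ m = 1) (hb : b ^ p ^ n = 1) (ha1 : a ≠ 1) :
    (∃ k : ℕ, b = a ^ k) ∨ ∃ k : ℕ, (a * b ^ k * a) ^ 2 = -1 := by
  have hx : IsNilpotent (a - 1) := isNilpotent_sub_one_of_pow_eq_one ha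
  have hy : IsNilpotent (b - 1) := isNilpotent_sub_one_of_pow_eq_one hb
  have hx0 : a - 1 ≠ 0 := sub_ne_zero.2 ha1
  have hsq {z : End (ZMod p) W} (hz : IsNilpotent z) : z ^ 2 = 0 :=
    pow_eq_zero_of_le hW (pow_finrank_eq_zero_of_isNilpotent hz)
  have hW2 : finrank (ZMod p) W = 2 := by
    by_contra h
    exact hx0 (pow_one (a - 1) ▸
      pow_eq_zero_of_le (by omega) (pow_finrank_eq_zero_of_isNilpotent hx))
  obtain ⟨x, rfl⟩ : ∃ x, a = 1 + x := ⟨a - 1, by abel⟩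
  obtain ⟨y, rfl⟩ : ∃ y, b = 1 + y := ⟨b - 1, by abel⟩
  simp only [add_sub_cancel_left] at hx hy hx0
  obtain ⟨c, hc⟩ | ⟨c, hc0, hc⟩ := exists_eq_smul_or_anticommutator hW2 hx hy hx0
  · refine .inl ⟨c.val, ?_⟩
    rw [one_add_pow_of_sq_eq_zero (hsq hx), hc, ← Nat.cast_smul_eq_nsmul (ZMod p),
      ZMod.natCast_zmod_val]
  · refine .inr ⟨(-c⁻¹).val, ?_⟩
    rw [one_add_pow_of_sq_eq_zero (hsq hy), ← Nat.cast_smul_eq_nsmul (ZMod p),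
      ZMod.natCast_zmod_val]
    refine sq_one_add_mul_one_add_mul_one_add (hsq hx) (by rw [smul_pow, hsq hy, smul_zero]) ?_
    rw [mul_smul_comm, smul_mul_assoc, ← smul_add, hc, smul_smul, neg_mul, inv_mul_cancel₀ hc0,
      neg_smul, one_smul]

end Unipotent

section ElementaryAbelian

open Module

theorem commute_mulEquivInv {V : Type*} [CommGroup V] (α : MulAut V) : Commute (MulEquiv.inv V) α :=
  MulEquiv.ext fun v ↦ (map_inv α v).symm

/-- The automorphisms of an elementary abelian `p`-group as linear endomorphisms over `ZMod p`. -/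
def mulAutToEnd (p : ℕ) (V : Type*) [CommGroup V] [Module (ZMod p) (Additive V)] :
    MulAut V →* End (ZMod p) (Additive V) where
  toFun α := (MonoidHom.toAdditive α.toMonoidHom).toZModLinearMap p
  map_one' := rfl
  map_mul' _ _ := rfl

variable {p : ℕ} {V : Type*} [CommGroup V] [Module (ZMod p) (Additive V)]

theorem mulAutToEnd_injective : Function.Injective (mulAutToEnd p V) := fun _ _ h ↦
  MulEquiv.ext fun v ↦ Additive.ofMul.injective (LinearMap.congr_fun h (Additive.ofMul v))

theorem pow_eq_one_of_module_zmod (v : V) : v ^ p = 1 :=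
  congrArg Additive.toMul (ZModModule.char_nsmul_eq_zero p (Additive.ofMul v))

theorem mulAutToEnd_inv : mulAutToEnd p V (MulEquiv.inv V) = -1 := rfl

variable [Fact p.Prime]

theorem finrank_additive_le {n : ℕ} (hV : Nat.card V ∣ p ^ n) :
    finrank (ZMod p) (Additive V) ≤ n := by
  have hp : p.Prime := Fact.out
  have : Finite V :=
    Nat.finite_of_card_ne_zero (ne_zero_of_dvd_ne_zero (pow_ne_zero _ hp.ne_zero) hV)
  have h := Module.natCard_eq_pow_finrank (K := ZMod p) (V := Additive V)
  rw [Nat.card_zmod] at h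
  exact (Nat.pow_dvd_pow_iff_le_right hp.one_lt).1 (h ▸ hV)

variable {α β : MulAut V} {m n : ℕ}

theorem mulAut_pow_apply [Finite V] (hV : Nat.card V ∣ p ^ 2) (hα : α ^ p ^ n = 1) (i : ℕ) (v : V) :
    (α ^ i) v = v * (α v / v) ^ i := by
  set a := mulAutToEnd p V α with ha
  have hnil : IsNilpotent (a - 1) :=
    isNilpotent_sub_one_of_pow_eq_one (p := p) (n := n) (by rw [ha, ← map_pow, hα, map_one])
  have hsq : (a - 1) ^ 2 = 0 :=
    pow_eq_zero_of_le (finrank_additive_le hV) (pow_finrank_eq_zero_of_isNilpotent hnil)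
  have h := one_add_pow_of_sq_eq_zero hsq i
  rw [add_sub_cancel, ha, ← map_pow] at h
  exact Additive.ofMul.injective (LinearMap.congr_fun h (Additive.ofMul v))

theorem mulAut_pow_prime_eq_one [Finite V] (hV : Nat.card V ∣ p ^ 2) (hα : α ^ p ^ n = 1) :
    α ^ p = 1 :=
  MulEquiv.ext fun v ↦ by
    rw [mulAut_pow_apply hV hα, pow_eq_one_of_module_zmod, mul_one, MulAut.one_apply]

theorem prod_range_mulAut_pow_apply [Finite V] (hp : Odd p) (hV : Nat.card V ∣ p ^ 2)
    (hα : α ^ p ^ n = 1) (v : V) : ∏ i ∈ Finset.range p, (α ^ i) v = 1 := by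
  obtain ⟨k, hk⟩ := hp
  have hsum : ∑ i ∈ Finset.range p, i = p * k := by
    rw [Finset.sum_range_id, hk, Nat.add_sub_cancel, mul_left_comm,
      Nat.mul_div_cancel_left _ two_pos]
  calc ∏ i ∈ Finset.range p, (α ^ i) v = ∏ i ∈ Finset.range p, v * (α v / v) ^ i :=
        Finset.prod_congr rfl fun i _ ↦ mulAut_pow_apply hV hα i v
    _ = v ^ p * (α v / v) ^ ∑ i ∈ Finset.range p, i := by
        rw [Finset.prod_mul_distrib, Finset.prod_const, Finset.card_range,
          Finset.prod_pow_eq_pow_sum]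
    _ = 1 := by
        rw [hsum, pow_mul, pow_eq_one_of_module_zmod (p := p) v,
          pow_eq_one_of_module_zmod (p := p) (α v / v), one_pow, one_mul]

theorem eq_pow_or_exists_sq_eq_inv [Finite V] (hV : Nat.card V ∣ p ^ 2) (hα : α ^ p ^ m = 1)
    (hβ : β ^ p ^ n = 1) (hα1 : α ≠ 1) :
    (∃ k : ℕ, β = α ^ k) ∨ ∃ k : ℕ, (α * β ^ k * α) ^ 2 = MulEquiv.inv V := by
  have hinj := mulAutToEnd_injective (p := p) (V := V)
  have h := eq_pow_or_exists_sq_eq_neg_one (finrank_additive_le hV) (a := mulAutToEnd p V α)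
    (b := mulAutToEnd p V β) (m := m) (n := n) (by rw [← map_pow, hα, map_one])
    (by rw [← map_pow, hβ, map_one])
    ((map_ne_one_iff _ hinj).2 hα1)
  simpa only [← mulAutToEnd_inv, ← map_pow, ← map_mul, hinj.eq_iff] using h

end ElementaryAbelian

section Sylow

variable {p : ℕ} [Fact p.Prime] {N : Type*} [Group N] [Finite N]

theorem exists_sylow_coe_eq_subgroupOf (T : Sylow p N) (M : Subgroup N) [M.Normal] :
    ∃ P : Sylow p M, (P : Subgroup M) = (T : Subgroup N).subgroupOf M := by
  obtain ⟨P⟩ : Nonempty (Sylow p M) := inferInstance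
  obtain ⟨Q, hQ⟩ := P.exists_comap_subtype_eq
  obtain ⟨g, rfl⟩ := MulAction.exists_smul_eq N Q T
  refine ⟨MulAut.conjNormal (H := M) g • P, ?_⟩
  ext m
  rw [Sylow.pointwise_smul_def, mem_pointwise_smul_iff_inv_smul_mem, ← hQ, mem_subgroupOf,
    Sylow.coe_subgroup_smul, mem_pointwise_smul_iff_inv_smul_mem, mem_comap, coe_subtype,
    ← map_inv, ← map_inv]
  rfl

theorem sup_normalizer_inf_eq_top (T : Sylow p N) {M C : Subgroup N} [M.Normal]
    (hM : M ≤ (T : Subgroup N) ⊓ M ⊔ C) :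
    C ⊔ normalizer (((T : Subgroup N) ⊓ M : Subgroup N) : Set N) = ⊤ := by
  obtain ⟨P, hP⟩ := exists_sylow_coe_eq_subgroupOf T M
  have h := P.normalizer_sup_eq_top
  rw [hP, subgroupOf_map_subtype] at h
  rw [eq_top_iff, ← h]
  exact sup_le le_sup_right (hM.trans (sup_le (le_normalizer.trans le_sup_right) le_sup_left))

theorem le_inf_sup_ker {H : Type*} [Group H] (f : N →* H) (T : Sylow p N) {M : Subgroup N}
    [M.Normal] (hM : IsPGroup p (M.map f)) : M ≤ (T : Subgroup N) ⊓ M ⊔ f.ker := by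
  obtain ⟨P, hP⟩ := exists_sylow_coe_eq_subgroupOf T M
  have htop : ⊤ = (P : Subgroup M).map (f.subgroupMap M) :=
    (P.mapSurjective (f.subgroupMap_surjective M)).is_maximal' (hM.to_subgroup ⊤) le_top
  intro m hm
  obtain ⟨x, hx, hfx⟩ := htop.le (mem_top (f.subgroupMap M ⟨m, hm⟩))
  have hxT : (x : N) ∈ (T : Subgroup N) ⊓ M := ⟨hP.le hx, x.2⟩
  rw [← mul_inv_cancel_left (x : N) m]
  refine mul_mem_sup hxT ?_
  rw [MonoidHom.mem_ker, map_mul, map_inv, inv_mul_eq_one]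
  exact congrArg Subtype.val hfx

theorem exists_mem_normalizer_map_eq {H : Type*} [Group H] (f : N →* H) (T : Sylow p N) {w : N}
    (hw : f w ∈ normalizer (((T : Subgroup N).map f : Subgroup H) : Set H)) :
    ∃ w' ∈ normalizer ((T : Subgroup N) : Set N), f w' = f w := by
  have hT : (T : Subgroup N) ≤ (T : Subgroup N) ⊔ f.ker := le_sup_left
  have hwT : ((w • T : Sylow p N) : Subgroup N) ≤ (T : Subgroup N) ⊔ f.ker := by
    rw [← comap_map_eq]
    rintro _ ⟨t, ht, rfl⟩
    change f (w * t * w⁻¹) ∈ (T : Subgroup N).map f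
    rw [map_mul, map_mul, map_inv]
    exact (hw (f t)).1 (mem_map_of_mem f ht)
  obtain ⟨x, hxT⟩ := MulAction.exists_smul_eq ((T : Subgroup N) ⊔ f.ker : Subgroup N)
    ((w • T).subtype hwT) (T.subtype hT)
  rw [Sylow.smul_subtype] at hxT
  have hxw : (x : N) * w ∈ normalizer ((T : Subgroup N) : Set N) :=
    Sylow.smul_eq_iff_mem_normalizer.1 (by rw [mul_smul]; exact Sylow.subtype_injective hxT)
  obtain ⟨t, ht, k, hk, hx⟩ := mem_sup_of_normal_right.1 x.2
  refine ⟨k * w, ?_, by rw [map_mul, MonoidHom.mem_ker.1 hk, one_mul]⟩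
  rw [← hx, mul_assoc] at hxw
  exact (mul_mem_cancel_left (le_normalizer ht)).1 hxw

end Sylow

section ElementaryAbelianNormal

open scoped IsMulCommutative

variable {M : Type*} [Group M] {V : Subgroup M} [V.Normal]

theorem ker_conjNormal : (MulAut.conjNormal (H := V)).ker = centralizer (V : Set M) := by
  ext m
  simp only [MonoidHom.mem_ker, mem_centralizer_iff, MulEquiv.ext_iff, Subtype.forall,
    Subtype.ext_iff, MulAut.conjNormal_apply, MulAut.one_apply, mul_inv_eq_iff_eq_mul,
    SetLike.mem_coe]
  exact forall₂_congr fun _ _ ↦ eq_comm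

theorem mul_pow_eq_prod_conjNormal_mul [IsMulCommutative V] (v : V) (t : M) (n : ℕ) :
    ((v : M) * t) ^ n = (∏ i ∈ Finset.range n, (MulAut.conjNormal t ^ i) v : V) * t ^ n := by
  induction n with
  | zero => simp
  | succ n ih =>
    rw [pow_succ, ih, Finset.prod_range_succ, ← map_pow, coe_mul, MulAut.conjNormal_apply]
    group

variable {p : ℕ} [Fact p.Prime]

theorem pow_prime_eq_one_of_conjNormal_eq_inv [IsMulCommutative V] [Finite V]
    [Module (ZMod p) (Additive V)] (hp : Odd p) (hV : Nat.card V ∣ p ^ 2) {w t : M} {n : ℕ}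
    (hw : MulAut.conjNormal w = MulEquiv.inv V) (ht : (MulAut.conjNormal t : MulAut V) ^ p ^ n = 1)
    (htp : t ^ p ∈ V) (hwt : w * t * w⁻¹ * t⁻¹ ∈ V) : t ^ p = 1 := by
  have hfix : w * t ^ p * w⁻¹ = t ^ p := by
    rw [← conj_pow, ← inv_mul_cancel_right (w * t * w⁻¹) t,
      mul_pow_eq_prod_conjNormal_mul ⟨_, hwt⟩, prod_range_mulAut_pow_apply hp hV ht, coe_one,
      one_mul]
  have hinv : w * t ^ p * w⁻¹ = (t ^ p)⁻¹ := by
    simpa using congrArg Subtype.val (DFunLike.congr_fun hw ⟨t ^ p, htp⟩)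
  have hexp : (t ^ p) ^ p = 1 :=
    congrArg Subtype.val (pow_eq_one_of_module_zmod (p := p) (⟨t ^ p, htp⟩ : V))
  have hsq : (t ^ p) ^ 2 = 1 := by
    rw [sq, mul_eq_one_iff_eq_inv, ← hinv, hfix]
  have hgcd := pow_gcd_eq_one.2 ⟨hsq, hexp⟩
  rwa [hp.coprime_two_left.gcd_eq_one, pow_one] at hgcd

theorem sylow_le_of_conjNormal_eq_inv [IsMulCommutative V] [Finite M]
    [Module (ZMod p) (Additive V)] (hp : Odd p) (hV : Nat.card V ∣ p ^ 2) {T : Sylow p M}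
    (hT : IsMetacyclic T) (hVT : V ≤ T)
    (hTV : (T : Subgroup M) ⊓ centralizer (V : Set M) ≤ V) {w : M}
    (hw : MulAut.conjNormal w = MulEquiv.inv V) : (T : Subgroup M) ≤ V := by
  obtain ⟨w, hwT, hww⟩ := exists_mem_normalizer_map_eq MulAut.conjNormal (w := w) (T := T) (by
    rw [hw, mem_normalizer_iff]
    intro α
    rw [(commute_mulEquivInv α).eq, mul_inv_cancel_right])
  rw [hw] at hww
  have hmem {t : M} (htT : t ∈ T) (ht : (MulAut.conjNormal t : MulAut V) = 1) : t ∈ V :=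
    hTV ⟨htT, ker_conjNormal.le ht⟩
  have hexp (t : T) : t ^ p = 1 := by
    obtain ⟨n, hn⟩ := T.2 t
    have htn : (MulAut.conjNormal (t : M) : MulAut V) ^ p ^ n = 1 := by
      rw [← map_pow, ← coe_pow, hn, coe_one, map_one]
    refine Subtype.ext (pow_prime_eq_one_of_conjNormal_eq_inv hp hV hww htn
      (hmem (pow_mem t.2 p) ?_) (hmem (mul_mem ((hwT t).1 t.2) (inv_mem t.2)) ?_))
    · rw [map_pow, mulAut_pow_prime_eq_one hV htn]
    · simp only [map_mul, map_inv, hww]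
      rw [(commute_mulEquivInv _).eq, mul_inv_cancel_right, mul_inv_cancel]
  have hcomm := hT.isMulCommutative hexp
  exact fun t ht ↦ hTV ⟨ht, fun v hv ↦ setLike_mul_comm (hVT hv) ht⟩

theorem sup_centralizer_normal [Finite M] [IsMulCommutative V] (hp : Odd p)
    (hexp : ∀ v : V, v ^ p = 1) {T : Sylow p M} (hT : IsMetacyclic T)
    (hTV : (T : Subgroup M) ⊓ centralizer (V : Set M) ≤ V) :
    ((T : Subgroup M) ⊔ centralizer (V : Set M)).Normal := by
  let _ : Module (ZMod p) (Additive V) := AddCommGroup.zmodModule fun v ↦ hexp v.toMul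
  have hVT : V ≤ T := IsPGroup.le_sylow_of_normal (fun v ↦ ⟨1, by rw [pow_one, hexp]⟩) T
  have hV : Nat.card V ∣ p ^ 2 := (hT.of_injective _ (inclusion_injective hVT)).natCard_dvd_sq hexp
  by_cases hle : (T : Subgroup M) ≤ V
  · rw [sup_eq_right.2 (hle.trans (le_centralizer V))]
    infer_instance
  obtain ⟨u, huT, huV⟩ := SetLike.not_le_iff_exists.1 hle
  set φ : M →* MulAut V := MulAut.conjNormal with hφ
  have hpow {t : M} (ht : t ∈ T) : ∃ n, φ t ^ p ^ n = 1 := by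
    obtain ⟨n, hn⟩ := T.2 ⟨t, ht⟩
    exact ⟨n, by rw [← map_pow]; exact (congrArg φ (congrArg Subtype.val hn)).trans (map_one φ)⟩
  have hconj (m : M) {t : M} (ht : t ∈ T) :
      m * t * m⁻¹ ∈ (T : Subgroup M) ⊔ centralizer (V : Set M) := by
    obtain ⟨j, hj⟩ := hpow huT
    obtain ⟨n, hn⟩ := hpow ht
    obtain ⟨k, hk⟩ | ⟨k, hk⟩ := eq_pow_or_exists_sq_eq_inv hV hj (β := φ (m * t * m⁻¹)) (n := n)
      (by rw [map_mul, map_mul, map_inv, conj_pow, hn, mul_one, mul_inv_cancel])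
      (fun h ↦ huV (hTV ⟨huT, ker_conjNormal.le h⟩))
    · rw [← ker_conjNormal, ← comap_map_eq, mem_comap, ← hφ, hk, ← map_pow]
      exact mem_map_of_mem φ (pow_mem huT k)
    · simp only [← map_mul, ← map_pow] at hk
      exact absurd (sylow_le_of_conjNormal_eq_inv hp hV hT hVT hTV hk) hle
  refine ⟨fun x hx m ↦ ?_⟩
  obtain ⟨t, ht, c, hc, rfl⟩ := mem_sup_of_normal_right.1 hx
  rw [← conj_mul]
  exact mul_mem (hconj m ht) (mem_sup_right (Normal.conj_mem inferInstance c hc m))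

end ElementaryAbelianNormal

section Frattini

variable {p : ℕ} [Fact p.Prime] {R : Type*} [Group R]

theorem isSimpleGroup_quotient_of_isCoatom {m : Subgroup R} [m.Normal] (hm : IsCoatom m) :
    IsSimpleGroup (R ⧸ m) where
  exists_pair_ne := (QuotientGroup.nontrivial_iff.2 hm.1).exists_pair_ne
  eq_bot_or_eq_top_of_normal H _ := by
    have hle : m ≤ H.comap (QuotientGroup.mk' m) := QuotientGroup.le_comap_mk' m H
    have hmap : (H.comap (QuotientGroup.mk' m)).map (QuotientGroup.mk' m) = H :=
      map_comap_eq_self_of_surjective (QuotientGroup.mk'_surjective m) H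
    rcases hm.le_iff.1 hle with h | h
    · right
      rw [← hmap, h, map_top_of_surjective _ (QuotientGroup.mk'_surjective m)]
    · left
      rw [← hmap, h, QuotientGroup.map_mk'_self]

variable [Finite R]

theorem normal_and_index_of_isCoatom (hR : IsPGroup p R) {m : Subgroup R} (hm : IsCoatom m) :
    m.Normal ∧ m.index = p := by
  have := hR.isNilpotent
  have hnormal : m.Normal := Group.normalizerCondition_of_isNilpotent.normal_of_coatom m hm
  have := isSimpleGroup_quotient_of_isCoatom hm
  have hprime : (Nat.card (R ⧸ m)).Prime := CommGroup.is_simple_iff_prime_card.1 inferInstance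
  obtain ⟨n, hn⟩ := IsPGroup.iff_card.1 (hR.to_quotient m)
  rw [hn] at hprime
  obtain rfl : n = 1 := hprime.eq_one_of_pow
  exact ⟨hnormal, by rw [index_eq_card, hn, pow_one]⟩

theorem pow_prime_mem_frattini (hR : IsPGroup p R) (x : R) : x ^ p ∈ frattini R := by
  refine mem_iInf.2 fun m ↦ mem_iInf.2 fun hm ↦ ?_
  obtain ⟨_, hindex⟩ := normal_and_index_of_isCoatom hR hm
  exact hindex ▸ m.pow_index_mem x

theorem commutator_le_frattini (hR : IsPGroup p R) : commutator R ≤ frattini R := by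
  refine le_iInf₂ fun m hm ↦ ?_
  obtain ⟨_, hindex⟩ := normal_and_index_of_isCoatom hR hm
  have : IsCyclic (R ⧸ m) := isCyclic_of_prime_card (index_eq_card m ▸ hindex)
  exact Normal.quotient_commutative_iff_commutator_le.1 inferInstance

open scoped Pointwise in
theorem smul_eq_self_of_smul_mod_frattini {A : Type*} [Group A] [MulDistribMulAction A R]
    (hA : IsPGroup p A) (hdvd : ¬ p ∣ Nat.card (frattini R))
    (htriv : ∀ (a : A) (r : R), r⁻¹ * a • r ∈ frattini R) (a : A) (r : R) : a • r = r := by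
  have hfix : FixedPoints.subgroup A R ⊔ frattini R = ⊤ := by
    refine eq_top_iff.2 fun r _ ↦ ?_
    let X : SubMulAction A R :=
      { carrier := r • (frattini R : Set R)
        smul_mem' a s hs := by
          rw [mem_leftCoset_iff] at hs ⊢
          simpa [mul_assoc] using mul_mem hs (htriv a s) }
    have hX : Nat.card X = Nat.card (frattini R) := Nat.card_congr (leftCosetEquivSubgroup r)
    obtain ⟨s, hs⟩ := hA.nonempty_fixed_point_of_prime_not_dvd_card X (hX ▸ hdvd)
    have hrs : r⁻¹ * s ∈ frattini R := (mem_leftCoset_iff r).1 s.2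
    have hsfix : (s : R) ∈ FixedPoints.subgroup A R := fun a ↦ congrArg Subtype.val (hs a)
    simpa using mul_mem_sup hsfix (inv_mem hrs)
  exact (frattini_nongenerating hfix).ge (mem_top r) a

theorem isPGroup_of_apply_mod_frattini (hR : IsPGroup p R) {A : Subgroup (MulAut R)}
    (hA : ∀ α ∈ A, ∀ r, r⁻¹ * α r ∈ frattini R) : IsPGroup p A := by
  have hp : p.Prime := Fact.out
  have : Finite (MulAut R) := Finite.of_injective (⇑) DFunLike.coe_injective
  rw [isPGroup_iff_primeFactors_card_subset hp.ne_zero, hp.primeFactors]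
  intro q hq
  have : Fact q.Prime := ⟨Nat.prime_of_mem_primeFactors hq⟩
  by_contra hqp
  obtain ⟨α, hα⟩ := exists_prime_orderOf_dvd_card' q (Nat.dvd_of_mem_primeFactors hq)
  have hdvd : ¬ q ∣ Nat.card (frattini R) := by
    obtain ⟨n, hn⟩ := IsPGroup.iff_card.1 (hR.to_subgroup (frattini R))
    rw [hn]
    exact fun h ↦ hqp (Finset.mem_singleton.2 (Nat.prime_eq_prime_of_dvd_pow Fact.out hp h))
  have hzpowers : IsPGroup q (zpowers (α : MulAut R)) :=
    .of_card (n := 1) (by rw [Nat.card_zpowers, orderOf_coe, hα, pow_one])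
  have hα1 : α = 1 := Subtype.ext <| MulEquiv.ext fun r ↦
    smul_eq_self_of_smul_mod_frattini hzpowers hdvd
      (fun β ↦ hA β ((zpowers_le (H := A)).2 α.2 β.2)) ⟨α, mem_zpowers _⟩ r
  rw [hα1, orderOf_one] at hα
  exact (Fact.out : q.Prime).ne_one hα.symm

end Frattini

section FrattiniQuotient

variable {p : ℕ} [Fact p.Prime] {N : Type*} [Group N] {R : Subgroup N} [R.Normal]

instance map_subtype_frattini_normal : ((frattini R).map R.subtype).Normal :=
  ConjAct.normal_of_characteristic_of_normal

/-- `C_N(R / Φ(R))`: the elements of `N` that act trivially by conjugation on the quotient of the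
normal subgroup `R` by its Frattini subgroup. -/
def frattiniCentralizer (R : Subgroup N) [R.Normal] : Subgroup N :=
  (centralizer (R.map (QuotientGroup.mk' ((frattini R).map R.subtype)) : Set _)).comap
    (QuotientGroup.mk' ((frattini R).map R.subtype))

instance frattiniCentralizer_normal : (frattiniCentralizer R).Normal :=
  have : (R.map (QuotientGroup.mk' ((frattini R).map R.subtype))).Normal :=
    Normal.map inferInstance _ (QuotientGroup.mk'_surjective _)
  Normal.comap inferInstance _

theorem isPGroup_map_conjNormal_frattiniCentralizer [Finite R] (hR : IsPGroup p R) :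
    IsPGroup p ((frattiniCentralizer R).map (MulAut.conjNormal (H := R))) := by
  refine isPGroup_of_apply_mod_frattini hR ?_
  rintro _ ⟨k, hk, rfl⟩ r
  set f := QuotientGroup.mk' ((frattini R).map R.subtype)
  have hcomm : f r * f k = f k * f r := mem_centralizer_iff.1 hk _ (mem_map_of_mem f r.2)
  have hf : f ((r : N)⁻¹ * (k * r * k⁻¹)) = 1 := by
    simp only [map_mul, map_inv, ← hcomm, mul_inv_cancel_right, inv_mul_cancel]
  obtain ⟨y, hy, hyr⟩ := (QuotientGroup.eq_one_iff _).1 hf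
  rwa [show r⁻¹ * MulAut.conjNormal k r = y from Subtype.ext hyr.symm]

variable [Finite N]

theorem frattiniCentralizer_le_inf_sup_centralizer (T : Sylow p N) (hRT : R ≤ T) :
    frattiniCentralizer R ≤
      (T : Subgroup N) ⊓ frattiniCentralizer R ⊔ centralizer (R : Set N) := by
  rw [← ker_conjNormal]
  exact le_inf_sup_ker _ T (isPGroup_map_conjNormal_frattiniCentralizer (T.2.to_le hRT))

theorem sup_frattiniCentralizer_normal (hp : Odd p) {T : Sylow p N} (hT : IsMetacyclic T)
    (hRT : R ≤ T) (hTR : (T : Subgroup N) ⊓ frattiniCentralizer R ≤ R) :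
    ((T : Subgroup N) ⊔ frattiniCentralizer R).Normal := by
  have hR : IsPGroup p R := T.2.to_le hRT
  set f := QuotientGroup.mk' ((frattini R).map R.subtype) with hfdef
  have hf : Function.Surjective f := QuotientGroup.mk'_surjective _
  set V := R.map f
  have : V.Normal := Normal.map inferInstance f hf
  have hcomm : IsMulCommutative V := by
    refine ⟨⟨?_⟩⟩
    rintro ⟨_, r, hr, rfl⟩ ⟨_, s, hs, rfl⟩
    refine Subtype.ext (commutatorElement_eq_one_iff_mul_comm.1 ?_)
    rw [← map_commutatorElement]
    exact (QuotientGroup.eq_one_iff _).2 ⟨_, commutator_le_frattini hR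
      (commutator_mem_commutator (mem_top ⟨r, hr⟩) (mem_top ⟨s, hs⟩)), rfl⟩
  have hexp (v : V) : v ^ p = 1 := by
    obtain ⟨_, r, hr, rfl⟩ := v
    exact Subtype.ext ((QuotientGroup.eq_one_iff _).2 ⟨_, pow_prime_mem_frattini hR ⟨r, hr⟩, rfl⟩)
  have hTV : (T.mapSurjective hf : Subgroup _) ⊓ centralizer (V : Set _) ≤ V := by
    rintro _ ⟨⟨t, ht, rfl⟩, htC⟩
    exact mem_map_of_mem f (hTR ⟨ht, htC⟩)
  have hnormal := sup_centralizer_normal hp hexp (T := T.mapSurjective hf)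
    (hT.of_surjective (f.subgroupMap T) (f.subgroupMap_surjective T)) hTV
  have hker : f.ker ≤ frattiniCentralizer R := by
    rw [frattiniCentralizer, ← hfdef]
    exact f.ker_le_comap _
  have hcomap : (((T : Subgroup N).map f) ⊔ centralizer (V : Set _)).comap f =
      (T : Subgroup N) ⊔ frattiniCentralizer R := by
    rw [← map_comap_eq_self_of_surjective hf (centralizer (V : Set _)), ← Subgroup.map_sup,
      comap_map_eq]
    exact sup_eq_left.2 (hker.trans le_sup_right)
  rw [← hcomap]
  exact hnormal.comap f

theorem exists_gt_sup_normalizer_eq_top_of_not_le {T : Sylow p N} (hRT : R ≤ T) {M : Subgroup N}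
    [M.Normal] (hM : M ≤ (T : Subgroup N) ⊓ M ⊔ centralizer (R : Set N))
    (hMR : ¬ (T : Subgroup N) ⊓ M ≤ R) :
    ∃ Q : Subgroup N, R < Q ∧ Q ≤ T ∧ centralizer (R : Set N) ⊔ normalizer (Q : Set N) = ⊤ := by
  refine ⟨(T : Subgroup N) ⊓ M ⊔ R, right_lt_sup.2 hMR, sup_le inf_le_left hRT, ?_⟩
  rw [eq_top_iff, ← sup_normalizer_inf_eq_top T hM]
  exact sup_le_sup_left normalizer_le_normalizer_sup_normal _

theorem exists_gt_sup_normalizer_eq_top (hp : Odd p) {T : Sylow p N} (hT : IsMetacyclic T)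
    (hRT : R < T) :
    ∃ Q : Subgroup N, R < Q ∧ Q ≤ T ∧ centralizer (R : Set N) ⊔ normalizer (Q : Set N) = ⊤ := by
  have hK := frattiniCentralizer_le_inf_sup_centralizer T hRT.le
  by_cases hTK : (T : Subgroup N) ⊓ frattiniCentralizer R ≤ R
  · have := sup_frattiniCentralizer_normal hp hT hRT.le hTK
    have hinf : (T : Subgroup N) ⊓ (T ⊔ frattiniCentralizer R) = T := inf_eq_left.2 le_sup_left
    refine exists_gt_sup_normalizer_eq_top_of_not_le hRT.le (M := T ⊔ frattiniCentralizer R) ?_ ?_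
    · rw [hinf]
      exact sup_le le_sup_left (hK.trans (sup_le_sup_right inf_le_left _))
    · rw [hinf]
      exact hRT.not_ge
  · exact exists_gt_sup_normalizer_eq_top_of_not_le hRT.le hK hTK

end FrattiniQuotient

section Fusion

open scoped Pointwise

variable {G : Type*} [Group G]

/-- Conjugation by `g` agrees on `Q` with conjugation by an element of `H`, i.e. the morphism
`c_g` of the fusion system on `Q` is realised in `H`. -/
def ConjRealizedBy (H Q : Subgroup G) (g : G) : Prop :=
  ∃ h ∈ H, ∀ q ∈ Q, MulAut.conj h q = MulAut.conj g q

namespace ConjRealizedBy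

variable {H Q Q' : Subgroup G} {g g' : G}

theorem exists_eq_mul (hg : ConjRealizedBy H Q g) :
    ∃ h ∈ H, ∃ c ∈ centralizer (Q : Set G), g = h * c := by
  obtain ⟨h, hH, heq⟩ := hg
  refine ⟨h, hH, h⁻¹ * g, mem_centralizer_iff.2 fun q hq ↦ ?_, (mul_inv_cancel_left h g).symm⟩
  rw [eq_comm, ← mul_inv_eq_iff_eq_mul, ← MulAut.conj_apply, map_mul, MulAut.mul_apply, ← heq q hq,
    map_inv, MulAut.inv_apply_self]

theorem mono (hg : ConjRealizedBy H Q g) (hQ : Q' ≤ Q) : ConjRealizedBy H Q' g := by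
  obtain ⟨h, hH, heq⟩ := hg
  exact ⟨h, hH, fun q hq ↦ heq q (hQ hq)⟩

theorem mul (hg' : ConjRealizedBy H (MulAut.conj g • Q) g') (hg : ConjRealizedBy H Q g) :
    ConjRealizedBy H Q (g' * g) := by
  obtain ⟨h, hH, heq⟩ := hg
  obtain ⟨h', hH', heq'⟩ := hg'
  refine ⟨h' * h, mul_mem hH' hH, fun q hq ↦ ?_⟩
  rw [map_mul, map_mul, MulAut.mul_apply, MulAut.mul_apply, heq q hq]
  exact heq' _ (smul_mem_pointwise_smul q (MulAut.conj g) Q hq)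

theorem inv (hg : ConjRealizedBy H Q g) : ConjRealizedBy H (MulAut.conj g • Q) g⁻¹ := by
  obtain ⟨h, hH, heq⟩ := hg
  refine ⟨h⁻¹, inv_mem hH, ?_⟩
  rintro _ ⟨q, hq, rfl⟩
  change MulAut.conj h⁻¹ (MulAut.conj g q) = MulAut.conj g⁻¹ (MulAut.conj g q)
  rw [map_inv, map_inv, MulAut.inv_apply_self, ← heq q hq, MulAut.inv_apply_self]

end ConjRealizedBy

/-- Every morphism `c_g : Q → S` of the fusion system of `G` on `S` is realised in `H`. -/
def ControlsFusionOn (S H Q : Subgroup G) : Prop :=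
  ∀ g, MulAut.conj g • Q ≤ S → ConjRealizedBy H Q g

/-- `Q` is fully normalized: `S ∩ N_G(Q)` has index prime to `p` in `N_G(Q)`, so that it is a Sylow
`p`-subgroup of `N_G(Q)` whenever `S` is a `p`-group. -/
def IsFullyNormalized (p : ℕ) (S Q : Subgroup G) : Prop :=
  ¬ p ∣ S.relIndex (normalizer (Q : Set G))

theorem conj_smul_eq_of_mem_normalizer {Q : Subgroup G} {n : G}
    (hn : n ∈ normalizer (Q : Set G)) : MulAut.conj n • Q = Q :=
  mem_normalizer_iff_map_conj_eq.1 hn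

theorem conj_smul_normalizer (Q : Subgroup G) (g : G) :
    MulAut.conj g • normalizer (Q : Set G) =
      normalizer ((MulAut.conj g • Q : Subgroup G) : Set G) :=
  map_equiv_normalizer_eq Q (MulAut.conj g)

theorem natCard_conj_smul (Q : Subgroup G) (g : G) :
    Nat.card (MulAut.conj g • Q : Subgroup G) = Nat.card Q :=
  (Nat.card_congr (equivSMul (MulAut.conj g) Q).toEquiv).symm

theorem conjRealizedBy_of_sup_normalizer_eq_top {S H R : Subgroup G}
    {Q : Subgroup (normalizer (R : Set G))} (hRQ : R.subgroupOf (normalizer (R : Set G)) < Q)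
    (hQS : Q ≤ S.subgroupOf (normalizer (R : Set G)))
    (htop : centralizer (R.subgroupOf (normalizer (R : Set G)) : Set (normalizer (R : Set G))) ⊔
      normalizer (Q : Set (normalizer (R : Set G))) = ⊤)
    (hlarge : ∀ P : Subgroup G, P ≤ S → R < P → ControlsFusionOn S H P) {n : G}
    (hn : n ∈ normalizer (R : Set G)) : ConjRealizedBy H R n := by
  obtain ⟨m, hm, c, hc, hmc⟩ := mem_sup_of_normal_right.1
    (((sup_comm _ _).trans htop).ge (mem_top ⟨n, hn⟩))
  have hRP : R < Q.map (Subgroup.subtype _) := by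
    simpa [subgroupOf_map_subtype, le_normalizer] using map_subtype_lt_map_subtype.2 hRQ
  have hPS : Q.map (Subgroup.subtype _) ≤ S := map_le_iff_le_comap.2 hQS
  have hmP : MulAut.conj (m : G) • Q.map (Subgroup.subtype _) ≤ S := by
    rintro _ ⟨_, ⟨q, hq, rfl⟩, rfl⟩
    exact hQS ((hm q).1 hq)
  obtain ⟨h, hH, heq⟩ := (hlarge _ hPS hRP m hmP).mono hRP.le
  refine ⟨h, hH, fun r hr ↦ ?_⟩
  have hcr : MulAut.conj (c : G) r = r := by
    rw [MulAut.conj_apply, mul_inv_eq_iff_eq_mul]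
    exact (congrArg Subtype.val (hc ⟨r, le_normalizer hr⟩ hr)).symm
  have hmcn : (m : G) * c = n := congrArg Subtype.val hmc
  rw [heq r hr, ← hmcn, map_mul, MulAut.mul_apply, hcr]

variable [Finite G] {p : ℕ} [Fact p.Prime]

theorem exists_conj_smul_le_sylow (S : Sylow p G) {P : Subgroup G} (hP : IsPGroup p P) :
    ∃ g : G, MulAut.conj g • P ≤ S := by
  obtain ⟨T, hPT⟩ := hP.exists_le_sylow
  obtain ⟨g, rfl⟩ := MulAction.exists_smul_eq G T S
  exact ⟨g, pointwise_smul_le_pointwise_smul_iff.2 hPT⟩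

theorem lt_inf_normalizer_of_lt {S Q : Subgroup G} (hS : IsPGroup p S) (hQ : Q < S) :
    Q < S ⊓ normalizer (Q : Set G) := by
  have := hS.isNilpotent
  have h : Q.subgroupOf S < normalizer (Q.subgroupOf S : Set S) :=
    Group.normalizerCondition_of_isNilpotent _
      (lt_top_iff_ne_top.2 fun h ↦ hQ.not_ge (subgroupOf_eq_top.1 h))
  rwa [← subgroupOf_normalizer_eq hQ.le, ← map_subtype_lt_map_subtype, subgroupOf_map_subtype,
    subgroupOf_map_subtype, inf_eq_left.2 hQ.le, inf_comm] at h

theorem exists_isFullyNormalized_conj_smul (S : Sylow p G) (Q : Subgroup G) :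
    ∃ g : G, IsFullyNormalized p (S : Subgroup G) (MulAut.conj g • Q) := by
  obtain ⟨P⟩ : Nonempty (Sylow p (normalizer (Q : Set G))) := inferInstance
  obtain ⟨g, hg⟩ := exists_conj_smul_le_sylow S (P.2.map (normalizer (Q : Set G)).subtype)
  have hdvd := relIndex_dvd_of_le_left (MulAut.conj g • normalizer (Q : Set G)) hg
  have hindex : ((P : Subgroup (normalizer (Q : Set G))).map (Subgroup.subtype _)).relIndex
      (normalizer (Q : Set G)) = (P : Subgroup (normalizer (Q : Set G))).index := by
    rw [relIndex, subgroupOf, comap_map_eq_self_of_injective (subtype_injective _)]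
  rw [relIndex_pointwise_smul, hindex, conj_smul_normalizer] at hdvd
  exact ⟨g, fun h ↦ P.not_dvd_index (h.trans hdvd)⟩

theorem IsFullyNormalized.exists_conj_smul_le {S : Sylow p G} {R P : Subgroup G}
    (hR : IsFullyNormalized p (S : Subgroup G) R) (hP : IsPGroup p P)
    (hPR : P ≤ normalizer (R : Set G)) :
    ∃ n ∈ normalizer (R : Set G), MulAut.conj n • P ≤ S := by
  let T := (S.2.comap_subtype (K := normalizer (R : Set G))).toSylow hR
  obtain ⟨n, hn⟩ := exists_conj_smul_le_sylow T (hP.comap_subtype (K := normalizer (R : Set G)))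
  refine ⟨n, n.2, ?_⟩
  rintro _ ⟨x, hx, rfl⟩
  exact hn (smul_mem_pointwise_smul ⟨x, hPR hx⟩ _ _ hx)

theorem IsFullyNormalized.exists_conj_smul_eq {S : Sylow p G} {R Q : Subgroup G}
    (hR : IsFullyNormalized p (S : Subgroup G) R) {a : G} (ha : MulAut.conj a • Q = R) :
    ∃ b : G, MulAut.conj b • Q = R ∧
      MulAut.conj b • ((S : Subgroup G) ⊓ normalizer (Q : Set G)) ≤ S := by
  obtain ⟨n, hn, hnS⟩ := hR.exists_conj_smul_le
    (P := MulAut.conj a • ((S : Subgroup G) ⊓ normalizer (Q : Set G)))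
    ((S.2.to_le inf_le_left).map _)
    (by
      rw [← ha, ← conj_smul_normalizer, pointwise_smul_le_pointwise_smul_iff]
      exact inf_le_right)
  refine ⟨n * a, ?_, ?_⟩
  · rw [map_mul, mul_smul, ha, conj_smul_eq_of_mem_normalizer hn]
  · rwa [map_mul, mul_smul]

theorem natCard_lt_of_lt {P Q : Subgroup G} (h : P < Q) : Nat.card P < Nat.card Q :=
  Set.Finite.card_lt_card (Set.toFinite _) (SetLike.coe_ssubset_coe.2 h)

theorem conj_smul_lt_of_lt {Q S : Subgroup G} (hQ : Q < S) {g : G} (hg : MulAut.conj g • Q ≤ S) :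
    MulAut.conj g • Q < S :=
  hg.lt_of_ne fun h ↦ (natCard_lt_of_lt hQ).ne (by rw [← h, natCard_conj_smul])

theorem controlsFusionOn_self {S H : Subgroup G} (hH : normalizer (S : Set G) ≤ H) :
    ControlsFusionOn S H S := by
  intro g hg
  have hgS : MulAut.conj g • S = S :=
    eq_of_le_of_card_ge hg (natCard_conj_smul S g).ge
  exact ⟨g, hH (mem_normalizer_iff_map_conj_eq.2 hgS), fun _ _ ↦ rfl⟩

theorem controlsFusionOn_of_isFullyNormalized {S : Sylow p G} {H Q R : Subgroup G} {a : G}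
    (hQ : Q < S) (ha : MulAut.conj a • Q = R) (hR : IsFullyNormalized p (S : Subgroup G) R)
    (hRH : ∀ n ∈ normalizer (R : Set G), ConjRealizedBy H R n)
    (hlarge : ∀ P : Subgroup G, P ≤ S → Nat.card Q < Nat.card P → ControlsFusionOn S H P) :
    ControlsFusionOn S H Q := by
  have hrealize {P : Subgroup G} (hP : P < S) (hPQ : Nat.card P = Nat.card Q) {b : G}
      (hb : MulAut.conj b • P = R) : ∃ b : G, MulAut.conj b • P = R ∧ ConjRealizedBy H P b := by
    obtain ⟨b, hbR, hbS⟩ := hR.exists_conj_smul_eq hb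
    have hlt := lt_inf_normalizer_of_lt S.2 hP
    exact ⟨b, hbR, (hlarge _ inf_le_left (hPQ ▸ natCard_lt_of_lt hlt) b hbS).mono hlt.le⟩
  intro g hg
  obtain ⟨b, hb, hbH⟩ := hrealize hQ rfl ha
  obtain ⟨c, hc, hcH⟩ := hrealize (conj_smul_lt_of_lt hQ hg) (natCard_conj_smul Q g) (b := a * g⁻¹)
    (by rwa [map_mul, mul_smul, map_inv, inv_smul_smul])
  have hn : c * g * b⁻¹ ∈ normalizer (R : Set G) := by
    refine mem_normalizer_iff_map_conj_eq.2 (?_ : MulAut.conj (c * g * b⁻¹) • R = R)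
    rw [map_mul, map_mul, mul_smul, mul_smul, map_inv, ← hb, inv_smul_smul, hc, hb]
  have hcn : ConjRealizedBy H R c⁻¹ := hc ▸ hcH.inv
  have hnb : ConjRealizedBy H Q (c * g * b⁻¹ * b) := (hb ▸ hRH _ hn).mul hbH
  rw [inv_mul_cancel_right] at hnb
  rw [← inv_mul_cancel_left c g]
  refine ConjRealizedBy.mul ?_ hnb
  rwa [map_mul, mul_smul, hc]

theorem controlsPFusion_of_forall_isFullyNormalized (S : Sylow p G) {H : Subgroup G}
    (hH : normalizer (S : Set G) ≤ H)
    (hR : ∀ R : Subgroup G, R < S → IsFullyNormalized p (S : Subgroup G) R →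
      (∀ P : Subgroup G, P ≤ S → R < P → ControlsFusionOn S H P) →
      ∀ n ∈ normalizer (R : Set G), ConjRealizedBy H R n) :
    ControlsPFusion (S : Subgroup G) H := by
  have hcontrol (Q : Subgroup G) (hQ : Q ≤ S) : ControlsFusionOn S H Q := by
    induction h : Nat.card S - Nat.card Q using Nat.strong_induction_on generalizing Q with
    | _ m ih =>
      obtain rfl | hlt := hQ.eq_or_lt
      · exact controlsFusionOn_self hH
      obtain ⟨a, ha⟩ := exists_isFullyNormalized_conj_smul S Q
      have hlarge (P : Subgroup G) (hP : P ≤ S) (hPQ : Nat.card Q < Nat.card P) :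
          ControlsFusionOn S H P := by
        have := card_le_of_le hP
        exact ih _ (by omega) P hP rfl
      obtain ⟨b, hb, hbS⟩ := ha.exists_conj_smul_eq rfl
      have hRS : MulAut.conj a • Q < S := hb ▸ conj_smul_lt_of_lt hlt
        ((pointwise_smul_le_pointwise_smul_iff.2 (le_inf hQ le_normalizer)).trans hbS)
      refine controlsFusionOn_of_isFullyNormalized hlt rfl ha (hR _ hRS ha fun P hP hlt ↦ ?_) hlarge
      exact hlarge P hP (natCard_conj_smul Q a ▸ natCard_lt_of_lt hlt)
  intro Q hQ g hg
  refine (hcontrol Q hQ g ?_).exists_eq_mul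
  rintro _ ⟨q, hq, rfl⟩
  exact hg q hq

theorem IsFullyNormalized.conjRealizedBy_of_isMetacyclic (hp : Odd p) {S : Sylow p G}
    (hS : IsMetacyclic S) {H R : Subgroup G} (hR : IsFullyNormalized p (S : Subgroup G) R)
    (hRS : R < S) (hlarge : ∀ P : Subgroup G, P ≤ S → R < P → ControlsFusionOn S H P) {n : G}
    (hn : n ∈ normalizer (R : Set G)) : ConjRealizedBy H R n := by
  set N := normalizer (R : Set G)
  let T : Sylow p N := (S.2.comap_subtype (K := N)).toSylow hR
  have hT : IsMetacyclic T := hS.of_injective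
    ((N.subtype.comp (T : Subgroup N).subtype).codRestrict (S : Subgroup G) fun t ↦ t.2)
    fun x y hxy ↦ Subtype.ext (Subtype.ext (Subtype.ext_iff.1 hxy :))
  have hRT : R.subgroupOf N < T := by
    rw [← map_subtype_lt_map_subtype, subgroupOf_map_subtype, inf_eq_left.2 le_normalizer]
    exact (lt_inf_normalizer_of_lt S.2 hRS).trans_eq (subgroupOf_map_subtype _ _).symm
  obtain ⟨Q, hRQ, hQT, htop⟩ := exists_gt_sup_normalizer_eq_top hp hT hRT
  exact conjRealizedBy_of_sup_normalizer_eq_top hRQ hQT htop hlarge hn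

end Fusion

theorem stmt8 {G : Type*} [Group G] [Fintype G] (p : ℕ) [Fact p.Prime] (hp : Odd p)
    (hdvd : p ∣ Fintype.card G) (S : Sylow p G)
    (hmc : IsMetacyclic (S : Subgroup G)) :
    ControlsPFusion (S : Subgroup G) (Subgroup.normalizer ((S : Subgroup G) : Set G)) :=
  controlsPFusion_of_forall_isFullyNormalized S le_rfl fun _ hRS hR hlarge _ hn ↦
    hR.conjRealizedBy_of_isMetacyclic hp hmc hRS hlarge hn
end

section
/- Let p be an odd prime and let S be a finite noncyclic metacyclic p-group. Then Ω1(S) is elementary abelian of order p², every subgroup of S that is elementary abelian of order p² is equal to Ω1(S), and the index of C_S(Ω1(S)) in S is either 1 or p. -/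
open Subgroup

/-- `Ω₁(S)`: the subgroup generated by the elements of `S` of order dividing `p`. -/
def omega1Grp (p : ℕ) (S : Type*) [Group S] : Subgroup S :=
  Subgroup.closure {g : S | g ^ p = 1}

/-! Let `N` be maximal among the cyclic normal subgroups of `S` with cyclic quotient, and let `T`
be the preimage of `Ω₁(S/N)`. Every element of order `p` lies in `T`, and `N` has index `p` in `T`;
by maximality `T` is not cyclic. An element of `T` acts on the cyclic group `N` as `x ↦ x ^ r` with
`r ^ p ≡ 1` modulo `|N|`, so (by lifting the exponent, `p` being odd) the commutators of `T` are
central of order dividing `p`, and the `p`-power map of `T` is a homomorphism with kernel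
`Ω₁(T) = Ω₁(S)`.

For `t ∈ T \ N` the power `t ^ p` does not generate `N`, since otherwise `T = ⟨t⟩`; hence
`t ^ p = x ^ p` for some `x ∈ N`, and `t * x⁻¹` is an element of order `p` outside `N`. Thus
`Ω₁(T)` meets `N` in a group of order `p` and covers `T/N`, and so has order `p²`. Finally, the
index of its centralizer is a power of `p` dividing `|GL₂(p)| = (p² - 1)(p² - p)`.
-/

open scoped commutatorElement

theorem pow_dvd_mul_sub_one_of_pow_dvd_pow_sub_one {p m : ℕ} [hp : Fact p.Prime] (hodd : Odd p)
    {r : ℤ} (h : (p : ℤ) ^ m ∣ r ^ p - 1) : (p : ℤ) ^ m ∣ p * (r - 1) := by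
  rcases m.eq_zero_or_pos with rfl | hm
  · simp
  have hdvd : (p : ℤ) ∣ r - 1 := by
    have hdvd_pow : (p : ℤ) ∣ r ^ p - 1 := (dvd_pow_self _ hm.ne').trans h
    rw [← ZMod.intCast_zmod_eq_zero_iff_dvd] at hdvd_pow ⊢
    simpa [ZMod.pow_card] using hdvd_pow
  have hndvd : ¬(p : ℤ) ∣ r := fun hr ↦
    (Nat.prime_iff_prime_int.mp hp.out).not_dvd_one (by simpa using dvd_sub hr hdvd)
  have hlte := Int.emultiplicity_pow_sub_pow hp.out hodd hdvd hndvd p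
  rw [one_pow] at hlte
  rw [pow_dvd_iff_le_emultiplicity] at h ⊢
  rwa [emultiplicity_mul (Nat.prime_iff_prime_int.mp hp.out), Int.natCast_emultiplicity, add_comm,
    ← hlte]

theorem dvd_choose_two_of_odd {n : ℕ} (hn : Odd n) : n ∣ n.choose 2 := by
  obtain ⟨k, rfl⟩ := hn
  exact ⟨k, by rw [Nat.choose_two_right, Nat.add_sub_cancel, mul_left_comm,
    Nat.mul_div_cancel_left _ two_pos]⟩

section ClassTwo

variable {G : Type*} [Group G] {u v : G}

theorem pow_mul_eq_commutator_pow_mul (hv : Commute ⁅v, u⁆ v) (n : ℕ) :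
    v ^ n * u = ⁅v, u⁆ ^ n * (u * v ^ n) := by
  induction n with
  | zero => simp
  | succ n ih =>
    calc v ^ (n + 1) * u = v * (v ^ n * u) := by rw [pow_succ', mul_assoc]
      _ = ⁅v, u⁆ ^ n * (v * u * v ^ n) := by
        rw [ih, ← mul_assoc, ← (hv.pow_left n).eq]
        simp only [mul_assoc]
      _ = ⁅v, u⁆ ^ n * (⁅v, u⁆ * (u * v) * v ^ n) := by rw [commutatorElement_def]; group
      _ = ⁅v, u⁆ ^ (n + 1) * (u * v ^ (n + 1)) := by
        rw [pow_succ ⁅v, u⁆, pow_succ' v]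
        simp only [mul_assoc]

theorem mul_pow_eq_commutator_pow_choose_mul (hu : Commute ⁅v, u⁆ u) (hv : Commute ⁅v, u⁆ v)
    (n : ℕ) : (u * v) ^ n = ⁅v, u⁆ ^ n.choose 2 * (u ^ n * v ^ n) := by
  induction n with
  | zero => simp
  | succ n ih =>
    calc (u * v) ^ (n + 1) = ⁅v, u⁆ ^ n.choose 2 * (u ^ n * (v ^ n * u) * v) := by
          rw [pow_succ, ih]
          simp only [mul_assoc]
      _ = ⁅v, u⁆ ^ n.choose 2 * (⁅v, u⁆ ^ n * u ^ n * (u * v ^ n) * v) := by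
          rw [pow_mul_eq_commutator_pow_mul hv, (hu.pow_pow n n).eq]
          simp only [mul_assoc]
      _ = ⁅v, u⁆ ^ (n + 1).choose 2 * (u ^ (n + 1) * v ^ (n + 1)) := by
          rw [Nat.choose_succ_succ' n 1, Nat.choose_one_right, add_comm n, pow_add, pow_succ u,
            pow_succ v]
          simp only [mul_assoc]

/-- The subgroup `Ωₙ(Z(G))` of central elements of order dividing `n`. -/
def centralTorsion (n : ℕ) (G : Type*) [Group G] : Subgroup G where
  carrier := {z | z ∈ center G ∧ z ^ n = 1}
  one_mem' := ⟨one_mem _, one_pow n⟩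
  mul_mem' {x y} hx hy := ⟨mul_mem hx.1 hy.1, by
    rw [Commute.mul_pow (mem_center_iff.mp hy.1 x), hx.2, hy.2, one_mul]⟩
  inv_mem' hx := ⟨inv_mem hx.1, by rw [inv_pow, hx.2, inv_one]⟩

theorem mul_pow_of_commutator_le_centralTorsion {n : ℕ} (hn : Odd n)
    (hG : commutator G ≤ centralTorsion n G) (u v : G) : (u * v) ^ n = u ^ n * v ^ n := by
  obtain ⟨hcenter, hpow⟩ := hG (commutator_mem_commutator (mem_top v) (mem_top u))
  obtain ⟨k, hk⟩ := dvd_choose_two_of_odd hn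
  rw [mul_pow_eq_commutator_pow_choose_mul (mem_center_iff.mp hcenter u).symm
    (mem_center_iff.mp hcenter v).symm, hk, pow_mul, hpow, one_pow, one_mul]

theorem commutator_eq_of_isCyclic_quotient (N : Subgroup G) [N.Normal] [IsCyclic (G ⧸ N)] :
    commutator G = ⁅N, (⊤ : Subgroup G)⁆ := by
  refine le_antisymm ?_ (commutator_mono le_top le_rfl)
  have hle : ⁅N, (⊤ : Subgroup G)⁆ ≤ N.comap (.id G) := commutator_le_left N ⊤
  let π := QuotientGroup.map ⁅N, (⊤ : Subgroup G)⁆ N (.id G) hle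
  -- Modulo `⁅N, G⁆` the subgroup `N` becomes central, and the quotient by it is still cyclic.
  have hπ : π.ker ≤ center (G ⧸ ⁅N, (⊤ : Subgroup G)⁆) := by
    rw [QuotientGroup.ker_map, comap_id, ← commutator_top_right_eq_bot_iff_le_center,
      ← map_top_of_surjective _ (QuotientGroup.mk'_surjective _), ← map_commutator,
      QuotientGroup.map_mk'_self]
  exact Normal.quotient_commutative_iff_commutator_le.mp
    (π.isMulCommutative_of_isCyclic_of_ker_le_center hπ)

end ClassTwo

section Cyclic

variable {C : Type*} [Group C] [IsCyclic C]

theorem exists_forall_pow_apply_eq_zpow_pow (σ : MulAut C) :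
    ∃ r : ℤ, ∀ (n : ℕ) (x : C), (σ ^ n) x = x ^ r ^ n := by
  obtain ⟨r, hr⟩ := σ.toMonoidHom.map_cyclic
  refine ⟨r, fun n x ↦ ?_⟩
  induction n with
  | zero => simp
  | succ n ih =>
    have hrx : σ x = x ^ r := hr x
    rw [pow_succ', MulAut.mul_apply, ih, map_zpow, hrx, pow_succ', zpow_mul]

variable {p : ℕ} [Fact p.Prime] {σ : MulAut C}

theorem apply_eq_self_of_pow_prime_eq_one (hσ : σ ^ p = 1) {x : C} (hx : x ^ p = 1) :
    σ x = x := by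
  obtain ⟨r, hr⟩ := exists_forall_pow_apply_eq_zpow_pow σ
  have hfermat : x ^ r ^ p = x ^ r := by
    refine zpow_eq_zpow_iff_modEq.mpr (Int.ModEq.of_dvd (m := orderOf x) (n := p) ?_ ?_)
    · exact_mod_cast orderOf_dvd_of_pow_eq_one hx
    · exact (ZMod.intCast_eq_intCast_iff _ _ _).mp (by simp [ZMod.pow_card])
  calc σ x = x ^ r ^ p := by simpa [hfermat] using hr 1 x
    _ = (σ ^ p) x := (hr p x).symm
    _ = x := by rw [hσ, MulAut.one_apply]

theorem mul_inv_apply_pow_eq_one_of_pow_prime_eq_one (hodd : Odd p) (hC : IsPGroup p C)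
    (hσ : σ ^ p = 1) (x : C) : (x * (σ x)⁻¹) ^ p = 1 := by
  obtain ⟨r, hr⟩ := exists_forall_pow_apply_eq_zpow_pow σ
  obtain ⟨m, hm⟩ := IsPGroup.iff_orderOf.mp hC x
  have hm' : (orderOf x : ℤ) = (p : ℤ) ^ m := by exact_mod_cast hm
  have hdvd : (p : ℤ) ^ m ∣ r ^ p - 1 := by
    rw [← hm', orderOf_dvd_iff_zpow_eq_one, zpow_sub_one, ← hr, hσ, MulAut.one_apply,
      mul_inv_cancel]
  have hx : x ^ ((p : ℤ) * (r - 1)) = 1 := by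
    rw [← orderOf_dvd_iff_zpow_eq_one, hm']
    exact pow_dvd_mul_sub_one_of_pow_dvd_pow_sub_one hodd hdvd
  have hσx : σ x = x ^ r := by simpa using hr 1 x
  rw [hσx, ← zpow_neg, ← zpow_one_add, ← zpow_natCast, ← zpow_mul, ← inv_eq_one, ← zpow_neg, ← hx]
  congr 1
  ring

theorem zpowers_eq_top_or_exists_pow_eq (hC : IsPGroup p C) (x : C) :
    zpowers x = ⊤ ∨ ∃ y, y ^ p = x := by
  have hp : p.Prime := Fact.out
  obtain ⟨g, hg⟩ := IsCyclic.exists_generator (α := C)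
  obtain ⟨k, rfl⟩ : ∃ k : ℕ, g ^ k = x :=
    (hC.isOfFinOrder hp.ne_zero g).mem_powers_iff_mem_zpowers.mpr (hg x)
  by_cases hk : p ∣ k
  · obtain ⟨q, rfl⟩ := hk
    exact .inr ⟨g ^ q, by rw [← pow_mul, mul_comm]⟩
  · have hcoprime : k.Coprime (orderOf g) :=
      (hC.orderOf_coprime ((Nat.Prime.coprime_iff_not_dvd hp).mpr hk) g).symm
    obtain ⟨m, hm⟩ := exists_pow_eq_self_of_coprime hcoprime
    refine .inl (eq_top_iff.mpr fun y _ ↦ zpowers_le.mpr ?_ (hg y))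
    exact mem_zpowers_iff.mpr ⟨m, by rw [zpow_natCast, hm]⟩

end Cyclic

section Omega

variable {p : ℕ} {G : Type*} [Group G]

theorem mem_omega1Grp_iff_of_mul_pow (h : ∀ x y : G, (x * y) ^ p = x ^ p * y ^ p) {x : G} :
    x ∈ omega1Grp p G ↔ x ^ p = 1 := by
  let f : G →* G := .mk' (· ^ p) h
  have hf : omega1Grp p G = f.ker := closure_eq f.ker
  rw [hf]
  rfl

theorem mem_omega1Grp_iff_of_isMulCommutative [IsMulCommutative G] {x : G} :
    x ∈ omega1Grp p G ↔ x ^ p = 1 :=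
  mem_omega1Grp_iff_of_mul_pow fun x y ↦ Commute.mul_pow (mul_comm' x y) p

theorem map_subtype_omega1Grp {H : Subgroup G} (hH : ∀ x : G, x ^ p = 1 → x ∈ H) :
    (omega1Grp p H).map H.subtype = omega1Grp p G := by
  rw [omega1Grp, MonoidHom.map_closure, omega1Grp]
  congr 1
  ext x
  constructor
  · rintro ⟨y, hy, rfl⟩
    exact congrArg H.subtype hy
  · exact fun hx ↦ ⟨⟨x, hH x hx⟩, Subtype.ext hx, rfl⟩

instance : (omega1Grp p G).Normal := by
  refine normalizer_eq_top_iff.mp (top_unique (le_normalizer_closure_iff.mpr fun g _ x hx ↦ ?_))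
  exact subset_closure (by rwa [Set.mem_ofPred_eq, conj_pow, conj_eq_one_iff])

theorem card_omega1Grp_of_isCyclic [Fact p.Prime] [Finite G] [IsCyclic G] [Nontrivial G]
    (hG : IsPGroup p G) : Nat.card (omega1Grp p G) = p := by
  let _ : CommGroup G := IsCyclic.commGroup
  have hker : omega1Grp p G = (powMonoidHom p : G →* G).ker := by
    ext x
    rw [mem_omega1Grp_iff_of_isMulCommutative, MonoidHom.mem_ker, powMonoidHom_apply]
  obtain ⟨n, hn, hcard⟩ := hG.nontrivial_iff_card.mp ‹_›
  rw [hker, IsCyclic.card_powMonoidHom_ker, hcard]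
  exact Nat.gcd_eq_right (dvd_pow_self p hn.ne')

theorem isCoatom_of_prime_index {N : Subgroup G} (hN : N.index.Prime) : IsCoatom N := by
  refine ⟨fun h ↦ hN.ne_one (index_eq_one.mpr h), fun H hH ↦ ?_⟩
  refine index_eq_one.mp ((hN.eq_one_or_self_of_dvd _ (index_dvd_of_le hH.le)).resolve_right ?_)
  intro hindex
  have hrel := relIndex_mul_index hH.le
  rw [hindex] at hrel
  exact hH.not_ge (relIndex_eq_one.mp (Nat.eq_of_mul_eq_mul_right hN.pos (by rw [hrel, one_mul])))

end Omega

section CyclicOfPrimeIndex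

variable {p : ℕ} [hp : Fact p.Prime] {T : Type*} [Group T] {N : Subgroup T} [N.Normal] [IsCyclic N]

theorem conjNormal_pow_index (t : T) : MulAut.conjNormal (H := N) t ^ N.index = 1 := by
  ext x
  have hcomm := mul_comm' (⟨t ^ N.index, N.pow_index_mem t⟩ : N) x
  rw [← map_pow, MulAut.conjNormal_apply, MulAut.one_apply, mul_inv_eq_iff_eq_mul]
  exact congrArg Subtype.val hcomm

theorem mem_center_of_pow_eq_one (hindex : N.index = p) {x : T} (hxN : x ∈ N) (hx : x ^ p = 1) :
    x ∈ center T := by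
  refine mem_center_iff.mpr fun t ↦ ?_
  have hσ : MulAut.conjNormal (H := N) t ^ p = 1 := hindex ▸ conjNormal_pow_index t
  have hfix := apply_eq_self_of_pow_prime_eq_one hσ (x := ⟨x, hxN⟩) (Subtype.ext hx)
  rw [← mul_inv_eq_iff_eq_mul]
  simpa using congrArg Subtype.val hfix

theorem commutator_le_centralTorsion (hodd : Odd p) (hT : IsPGroup p T) (hindex : N.index = p) :
    commutator T ≤ centralTorsion p T := by
  have : IsCyclic (T ⧸ N) := isCyclic_of_prime_card hindex
  rw [commutator_eq_of_isCyclic_quotient N, commutator_le]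
  intro x hx t _
  have hσ : MulAut.conjNormal (H := N) t ^ p = 1 := hindex ▸ conjNormal_pow_index t
  have hpow : ⁅x, t⁆ ^ p = 1 := by
    simpa [commutatorElement_def, mul_assoc] using congrArg Subtype.val
      (mul_inv_apply_pow_eq_one_of_pow_prime_eq_one hodd (hT.to_subgroup N) hσ ⟨x, hx⟩)
  have hmem : ⁅x, t⁆ ∈ N := commutator_le_left N ⊤ (commutator_mem_commutator hx (mem_top t))
  exact ⟨mem_center_of_pow_eq_one hindex hmem hpow, hpow⟩

theorem exists_mem_pow_eq_pow_of_not_isCyclic (hT : IsPGroup p T) (hnc : ¬IsCyclic T)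
    (hindex : N.index = p) {t : T} (ht : t ∉ N) : ∃ x ∈ N, x ^ p = t ^ p := by
  have htN : t ^ p ∈ N := hindex ▸ N.pow_index_mem t
  rcases zpowers_eq_top_or_exists_pow_eq (hT.to_subgroup N) ⟨t ^ p, htN⟩ with htop | ⟨y, hy⟩
  · have hle : N ≤ zpowers t := fun x hx ↦ by
      obtain ⟨k, hk⟩ := mem_zpowers_iff.mp (htop ▸ mem_top (⟨x, hx⟩ : N))
      have hkx : (t ^ p) ^ k = x := congrArg Subtype.val hk
      rw [← hkx]
      exact zpow_mem (pow_mem (mem_zpowers t) p) k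
    have hlt : N < zpowers t := lt_of_le_not_ge hle fun h ↦ ht (h (mem_zpowers t))
    have hN : IsCoatom N := isCoatom_of_prime_index (hindex ▸ hp.out)
    exact absurd ⟨t, (eq_top_iff' _).mp (hN.2 _ hlt)⟩ hnc
  · exact ⟨y, y.2, congrArg Subtype.val hy⟩

theorem mul_pow_of_isCyclic_of_index_eq_prime (hodd : Odd p) (hT : IsPGroup p T)
    (hindex : N.index = p) (u v : T) : (u * v) ^ p = u ^ p * v ^ p :=
  mul_pow_of_commutator_le_centralTorsion hodd (commutator_le_centralTorsion hodd hT hindex) u v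

theorem relIndex_omega1Grp_of_not_isCyclic (hodd : Odd p) (hT : IsPGroup p T) (hnc : ¬IsCyclic T)
    (hindex : N.index = p) : N.relIndex (omega1Grp p T) = p := by
  have hdvd : N.relIndex (omega1Grp p T) ∣ p := hindex ▸ N.relIndex_dvd_index_of_normal _
  refine (hp.out.eq_one_or_self_of_dvd _ hdvd).resolve_left fun hone ↦ ?_
  obtain ⟨t, ht⟩ : ∃ t, t ∉ N := by
    by_contra! h
    exact hp.out.ne_one (hindex.symm.trans (index_eq_one.mpr ((eq_top_iff' _).mpr h)))
  obtain ⟨x, hx, hpow⟩ := exists_mem_pow_eq_pow_of_not_isCyclic hT hnc hindex ht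
  have hmem : t * x⁻¹ ∈ omega1Grp p T := subset_closure <| by
    rw [Set.mem_ofPred_eq, mul_pow_of_isCyclic_of_index_eq_prime hodd hT hindex, inv_pow, hpow,
      mul_inv_cancel]
  exact ht ((mul_mem_cancel_right (inv_mem hx)).mp (relIndex_eq_one.mp hone hmem))

theorem card_omega1Grp_of_not_isCyclic [Finite T] (hodd : Odd p) (hT : IsPGroup p T)
    (hnc : ¬IsCyclic T) (hindex : N.index = p) : Nat.card (omega1Grp p T) = p ^ 2 := by
  have : Nontrivial N := (nontrivial_iff_ne_bot N).mpr fun hbot ↦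
    hnc (isCyclic_of_prime_card (p := p) (by rw [← hindex, hbot, index_bot]))
  have hsub : (omega1Grp p T).subgroupOf N = omega1Grp p N := by
    ext x
    rw [mem_subgroupOf,
      mem_omega1Grp_iff_of_mul_pow (mul_pow_of_isCyclic_of_index_eq_prime hodd hT hindex),
      mem_omega1Grp_iff_of_isMulCommutative]
    norm_cast
  have hinf : Nat.card (N ⊓ omega1Grp p T : Subgroup T) = p := by
    rw [← inf_subgroupOf_left] at hsub
    rw [← Nat.card_congr (subgroupOfEquivOfLe inf_le_left).toEquiv, hsub,
      card_omega1Grp_of_isCyclic (hT.to_subgroup N)]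
  have hmul := relIndex_mul_relIndex ⊥ (N ⊓ omega1Grp p T) (omega1Grp p T) bot_le inf_le_right
  rw [relIndex_bot_left, relIndex_bot_left, inf_relIndex_right, hinf,
    relIndex_omega1Grp_of_not_isCyclic hodd hT hnc hindex] at hmul
  rw [← hmul, sq]

end CyclicOfPrimeIndex

section Reduction

variable {p : ℕ} [hp : Fact p.Prime] {S : Type*} [Group S]

theorem relIndex_comap_omega1Grp_quotient (N : Subgroup S) [N.Normal] [Finite (S ⧸ N)]
    [IsCyclic (S ⧸ N)] [Nontrivial (S ⧸ N)] (hN : IsPGroup p (S ⧸ N)) :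
    N.relIndex ((omega1Grp p (S ⧸ N)).comap (QuotientGroup.mk' N)) = p := by
  have hcard := relIndex_ker ((omega1Grp p (S ⧸ N)).comap (QuotientGroup.mk' N))
    (QuotientGroup.mk' N)
  rwa [QuotientGroup.ker_mk', map_comap_eq_self_of_surjective (QuotientGroup.mk'_surjective N),
    card_omega1Grp_of_isCyclic hN] at hcard

theorem isCyclic_quotient_of_le {N M : Subgroup S} [N.Normal] [M.Normal] [IsCyclic (S ⧸ N)]
    (h : N ≤ M) : IsCyclic (S ⧸ M) :=
  isCyclic_of_surjective (QuotientGroup.map N M (.id S) h)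
    (QuotientGroup.map_surjective_of_surjective N M (.id S) QuotientGroup.mk_surjective h)

variable [Finite S]

theorem IsMetacyclic.exists_not_isCyclic_and_index_eq_prime (hmc : IsMetacyclic S)
    (hS : IsPGroup p S) (hnc : ¬IsCyclic S) :
    ∃ T : Subgroup S, (∀ x : S, x ^ p = 1 → x ∈ T) ∧ ¬IsCyclic T ∧
      ∃ N : Subgroup T, ∃ _ : N.Normal, IsCyclic N ∧ N.index = p := by
  obtain ⟨N, ⟨_, hNcyc, _⟩, hmax⟩ := (Set.toFinite {N : Subgroup S | ∃ _ : N.Normal,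
    IsCyclic N ∧ IsCyclic (S ⧸ N)}).exists_maximal hmc
  have : Nontrivial (S ⧸ N) := QuotientGroup.nontrivial_iff.mpr fun htop ↦
    hnc (topEquiv.isCyclic.mp (htop ▸ hNcyc))
  let T := (omega1Grp p (S ⧸ N)).comap (QuotientGroup.mk' N)
  have hindex : N.relIndex T = p := relIndex_comap_omega1Grp_quotient N (hS.to_quotient N)
  have hNT : N ≤ T := (QuotientGroup.ker_mk' N).ge.trans (ker_le_comap _ _)
  refine ⟨T, fun x hx ↦ ?_, fun hT ↦ ?_, N.subgroupOf T, inferInstance, ?_, hindex⟩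
  · exact subset_closure (by rw [Set.mem_ofPred_eq, ← map_pow, hx, map_one])
  · have hTN : T ≤ N := hmax ⟨inferInstance, hT, isCyclic_quotient_of_le hNT⟩ hNT
    exact hp.out.ne_one (hindex.symm.trans (relIndex_eq_one.mpr hTN))
  · exact (subgroupOfEquivOfLe hNT).isCyclic.mpr hNcyc

theorem IsMetacyclic.pow_eq_one_of_mem_omega1Grp (hmc : IsMetacyclic S) (hodd : Odd p)
    (hS : IsPGroup p S) (hnc : ¬IsCyclic S) {x : S} (hx : x ∈ omega1Grp p S) : x ^ p = 1 := by
  obtain ⟨T, hT, -, N, _, _, hindex⟩ := hmc.exists_not_isCyclic_and_index_eq_prime hS hnc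
  rw [← map_subtype_omega1Grp hT] at hx
  obtain ⟨y, hy, rfl⟩ := hx
  have hpow := mul_pow_of_isCyclic_of_index_eq_prime hodd (hS.to_subgroup T) hindex
  exact congrArg T.subtype ((mem_omega1Grp_iff_of_mul_pow hpow).mp hy)

theorem IsMetacyclic.card_omega1Grp (hmc : IsMetacyclic S) (hodd : Odd p) (hS : IsPGroup p S)
    (hnc : ¬IsCyclic S) : Nat.card (omega1Grp p S) = p ^ 2 := by
  obtain ⟨T, hT, hTnc, N, _, _, hindex⟩ := hmc.exists_not_isCyclic_and_index_eq_prime hS hnc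
  rw [← map_subtype_omega1Grp hT, card_map_of_injective T.subtype_injective,
    card_omega1Grp_of_not_isCyclic hodd (hS.to_subgroup T) hTnc hindex]

end Reduction

section ElementaryAbelian

variable {p : ℕ}

theorem card_multiplicative_zmod_prod_zmod :
    Nat.card (Multiplicative (ZMod p × ZMod p)) = p ^ 2 := by
  rw [Nat.card_congr Multiplicative.toAdd, Nat.card_prod, Nat.card_zmod, sq]

theorem multiplicative_zmod_prod_zmod_pow (x : Multiplicative (ZMod p × ZMod p)) : x ^ p = 1 :=
  Multiplicative.toAdd.injective (by ext <;> simp)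

variable [hp : Fact p.Prime]

theorem nonempty_linearEquiv_of_natCard_eq {K V W : Type*} [Field K] [Finite K] [AddCommGroup V]
    [Module K V] [Finite V] [AddCommGroup W] [Module K W] [Finite W]
    (h : Nat.card V = Nat.card W) : Nonempty (V ≃ₗ[K] W) := by
  rw [Module.natCard_eq_pow_finrank (K := K), Module.natCard_eq_pow_finrank (K := K) (V := W)] at h
  exact ⟨LinearEquiv.ofFinrankEq V W (Nat.pow_right_injective Finite.one_lt_card h)⟩

theorem nonempty_mulEquiv_of_forall_pow_eq_one {G H : Type*} [CommGroup G] [Finite G] [CommGroup H]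
    [Finite H] (hG : ∀ x : G, x ^ p = 1) (hH : ∀ x : H, x ^ p = 1)
    (hcard : Nat.card G = Nat.card H) : Nonempty (G ≃* H) := by
  let _ : Module (ZMod p) (Additive G) := AddCommGroup.zmodModule hG
  let _ : Module (ZMod p) (Additive H) := AddCommGroup.zmodModule hH
  obtain ⟨e⟩ : Nonempty (Additive G ≃ₗ[ZMod p] Additive H) :=
    nonempty_linearEquiv_of_natCard_eq hcard
  exact ⟨MulEquiv.toAdditive.symm e.toAddEquiv⟩

theorem nonempty_mulEquiv_zmod_prod_zmod_iff {G : Type*} [Group G] :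
    Nonempty (G ≃* Multiplicative (ZMod p × ZMod p)) ↔
      Nat.card G = p ^ 2 ∧ ∀ x : G, x ^ p = 1 := by
  constructor
  · rintro ⟨e⟩
    exact ⟨(Nat.card_congr e.toEquiv).trans card_multiplicative_zmod_prod_zmod, fun x ↦
      e.injective (by rw [map_pow, multiplicative_zmod_prod_zmod_pow, map_one])⟩
  · rintro ⟨hcard, hpow⟩
    have : Finite G := Nat.finite_of_card_ne_zero (hcard ▸ pow_ne_zero 2 hp.out.ne_zero)
    let _ : CommGroup G := IsPGroup.commGroupOfCardEqPrimeSq hcard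
    exact nonempty_mulEquiv_of_forall_pow_eq_one hpow multiplicative_zmod_prod_zmod_pow
      (hcard.trans card_multiplicative_zmod_prod_zmod.symm)

theorem card_addAut_of_module_zmod (V : Type*) [AddCommGroup V] [Module (ZMod p) V] [Finite V] :
    Nat.card (AddAut V) = ∏ i : Fin (Module.finrank (ZMod p) V),
      (p ^ Module.finrank (ZMod p) V - p ^ (i : ℕ)) := by
  let linearEquiv : AddAut V ≃ (V ≃ₗ[ZMod p] V) :=
    { toFun := fun e ↦ e.toLinearEquiv (ZMod.map_smul e)
      invFun := fun e ↦ e.toAddEquiv }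
  let generalLinear : GL (Fin (Module.finrank (ZMod p) V)) (ZMod p) ≃* (V ≃ₗ[ZMod p] V) :=
    (Matrix.GeneralLinearGroup.toLin' (Module.finBasis (ZMod p) V)).trans
      (LinearMap.GeneralLinearGroup.generalLinearEquiv _ _)
  rw [Nat.card_congr linearEquiv, ← Nat.card_congr generalLinear.toEquiv, Matrix.card_GL_field,
    ZMod.card]

theorem card_mulAut_multiplicative_zmod_prod_zmod :
    Nat.card (MulAut (Multiplicative (ZMod p × ZMod p))) = (p ^ 2 - 1) * (p ^ 2 - p) := by
  have hrank : Module.finrank (ZMod p) (ZMod p × ZMod p) = 2 := by simp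
  rw [Nat.card_congr (MulAutMultiplicative (ZMod p × ZMod p)).toEquiv,
    Nat.card_congr Multiplicative.toAdd, card_addAut_of_module_zmod (p := p), hrank,
    Fin.prod_univ_two]
  simp only [Fin.val_zero, Fin.val_one, pow_zero, pow_one]

theorem not_sq_dvd_card_mulAut_multiplicative_zmod_prod_zmod :
    ¬p ^ 2 ∣ Nat.card (MulAut (Multiplicative (ZMod p × ZMod p))) := by
  have hcoprime {k : ℕ} (hk : k ≠ 0) : p.Coprime (p ^ k - 1) :=
    ((Nat.coprime_self_sub_right (Nat.one_le_pow _ _ hp.out.pos)).mpr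
      (Nat.coprime_one_right _)).coprime_dvd_left (dvd_pow_self p hk)
  have hfactor : (p ^ 2 - 1) * (p ^ 2 - p) = p * ((p ^ 2 - 1) * (p ^ 1 - 1)) := by
    rw [mul_left_comm, mul_tsub p, mul_one, pow_one, ← sq]
  rw [card_mulAut_multiplicative_zmod_prod_zmod, hfactor]
  intro hdvd
  have hdvd' : p ∣ (p ^ 2 - 1) * (p ^ 1 - 1) :=
    Nat.dvd_of_mul_dvd_mul_left hp.out.pos (by rwa [← sq])
  exact hp.out.ne_one
    (((hcoprime two_ne_zero).mul_right (hcoprime one_ne_zero)).eq_one_of_dvd hdvd')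

end ElementaryAbelian

section Centralizer

theorem index_centralizer_dvd_card_mulAut {G : Type*} [Group G] (K : Subgroup G) [K.Normal] :
    (centralizer (K : Set G)).index ∣ Nat.card (MulAut K) := by
  have hker : (MulAut.conjNormal (H := K)).ker = centralizer (K : Set G) := by
    ext g
    simp only [MonoidHom.mem_ker, mem_centralizer_iff, MulEquiv.ext_iff, Subtype.ext_iff,
      Subtype.forall, MulAut.conjNormal_apply, MulAut.one_apply, mul_inv_eq_iff_eq_mul,
      SetLike.mem_coe, eq_comm (a := g * _)]
  rw [← hker, index_ker]
  exact card_subgroup_dvd_card _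

theorem index_centralizer_mem_of_mulEquiv {p : ℕ} [Fact p.Prime] {G : Type*} [Group G]
    (hG : IsPGroup p G) {K : Subgroup G} [K.Normal]
    (e : K ≃* Multiplicative (ZMod p × ZMod p)) :
    (centralizer (K : Set G)).index ∈ ({1, p} : Set ℕ) := by
  have hdvd := index_centralizer_dvd_card_mulAut K
  rw [Nat.card_congr (MulAut.congr e).toEquiv] at hdvd
  have : (centralizer (K : Set G)).FiniteIndex :=
    ⟨ne_zero_of_dvd_ne_zero Nat.card_pos.ne' hdvd⟩
  obtain ⟨n, hn⟩ := hG.index (centralizer (K : Set G))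
  rw [hn] at hdvd
  have hlt : n < 2 := lt_of_not_ge fun hle ↦
    not_sq_dvd_card_mulAut_multiplicative_zmod_prod_zmod ((pow_dvd_pow p hle).trans hdvd)
  rw [hn]
  interval_cases n <;> simp

end Centralizer

theorem stmt10 (p : ℕ) [Fact p.Prime] (hodd : Odd p) (S : Type*) [Group S] [Finite S]
    (hpS : IsPGroup p S) (hnc : ¬IsCyclic S) (hmc : IsMetacyclic S) :
    Nonempty (omega1Grp p S ≃* Multiplicative (ZMod p × ZMod p)) ∧
      (∀ E : Subgroup S, Nonempty (E ≃* Multiplicative (ZMod p × ZMod p)) →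
        E = omega1Grp p S) ∧
      (Subgroup.centralizer ((omega1Grp p S : Subgroup S) : Set S)).index ∈
        ({1, p} : Set ℕ) := by
  have hpow : ∀ x ∈ omega1Grp p S, x ^ p = 1 := fun _ ↦
    hmc.pow_eq_one_of_mem_omega1Grp hodd hpS hnc
  have hcard : Nat.card (omega1Grp p S) = p ^ 2 := hmc.card_omega1Grp hodd hpS hnc
  have helem : Nonempty (omega1Grp p S ≃* Multiplicative (ZMod p × ZMod p)) :=
    nonempty_mulEquiv_zmod_prod_zmod_iff.mpr ⟨hcard, fun x ↦ Subtype.ext (hpow x x.2)⟩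
  refine ⟨helem, fun E hE ↦ ?_, helem.elim (index_centralizer_mem_of_mulEquiv hpS)⟩
  obtain ⟨hEcard, hEpow⟩ := nonempty_mulEquiv_zmod_prod_zmod_iff.mp hE
  have hle : E ≤ omega1Grp p S := fun x hx ↦
    subset_closure (congrArg Subtype.val (hEpow ⟨x, hx⟩))
  exact eq_of_le_of_card_ge hle (hcard.trans hEcard.symm).le
end
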